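/- arXiv:1510.05013 — 7 statements merged into one kernel-verified Lean document; each statement's English description precedes it below -/
import Mathlib

section
/- Let A be a partial H-module algebra and 𝓘 an ideal of the partial smash product A#H. Then 𝓘 ∩ A (identifying A with A#1_H) is an H-stable ideal of A. -/
open TensorProduct

noncomputable section

variable (k : Type*) [Field k]

/-- The "Sweedler sum" `h ↦ Σ f(h₁) * g(h₂)`. -/
def sweedler {H A : Type*} [Ring H] [HopfAlgebra k H]
    [Ring A] [Algebra k A] (f g : H →ₗ[k] A) : H →ₗ[k] A :=
  (LinearMap.mul' k A) ∘ₗ (TensorProduct.map f g) ∘ₗ Coalgebra.comul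

/-- A (left) partial `H`-module algebra structure on a unital algebra `A`:
`1_H · a = a`, `h · (ab) = Σ (h₁·a)(h₂·b)` and `h·(g·b) = Σ (h₁·1)((h₂ g)·b)`. -/
structure PartialModuleAlgebra (H A : Type*) [Ring H] [HopfAlgebra k H]
    [Ring A] [Algebra k A] where
  act : H →ₗ[k] A →ₗ[k] A
  one_act : ∀ a : A, act 1 a = a
  act_mul : ∀ (h : H) (a b : A),
    act h (a * b) = sweedler k (act.flip a) (act.flip b) h
  act_act : ∀ (h g : H) (b : A),
    act h (act g b) =
      sweedler k (act.flip 1) ((act.flip b) ∘ₗ LinearMap.mulRight k g) h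

variable {H A : Type*} [Ring H] [HopfAlgebra k H] [Ring A] [Algebra k A]

/-- A (two-sided) ideal of `A`, encoded as a `k`-submodule closed under multiplication
by elements of `A` on both sides. -/
def IsIdeal (I : Submodule k A) : Prop :=
  ∀ a ∈ I, ∀ b : A, a * b ∈ I ∧ b * a ∈ I

/-- An `H`-stable subspace: `H · I ⊆ I`. -/
def Hstable (ξ : PartialModuleAlgebra k H A) (I : Submodule k A) : Prop :=
  ∀ (h : H), ∀ x ∈ I, ξ.act h x ∈ I

/-- `(I : H) = {x ∈ I | h · x ∈ I for all h ∈ H}`. -/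
def colonH (ξ : PartialModuleAlgebra k H A) (I : Submodule k A) : Submodule k A :=
  I ⊓ ⨅ h : H, Submodule.comap (ξ.act h) I

/-- `μ` realizes the smash-product multiplication on `A ⊗ H`:
`(a # h)(b # g) = Σ a(h₁·b) # h₂ g`. -/
def SmashMulFormula (ξ : PartialModuleAlgebra k H A)
    (μ : (A ⊗[k] H) →ₗ[k] (A ⊗[k] H) →ₗ[k] (A ⊗[k] H)) : Prop :=
  ∀ (a b : A) (h g : H),
    μ (a ⊗ₜ[k] h) (b ⊗ₜ[k] g) =
      (TensorProduct.map ((LinearMap.mulLeft k a) ∘ₗ ξ.act.flip b)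
        (LinearMap.mulRight k g)) (Coalgebra.comul h)

variable (H A) in
/-- The element `1_A ⊗ 1_H`. -/
def smashE : A ⊗[k] H := (1 : A) ⊗ₜ[k] (1 : H)

/-- The partial smash product `A # H = (A ⊗ H)(1_A # 1_H)` as a subspace of `A ⊗ H`. -/
def smashS (μ : (A ⊗[k] H) →ₗ[k] (A ⊗[k] H) →ₗ[k] (A ⊗[k] H)) : Submodule k (A ⊗[k] H) :=
  LinearMap.range (μ.flip (smashE k H A))

/-- The canonical embedding `A → A # H`, `a ↦ a # 1_H`. -/
def smashF (μ : (A ⊗[k] H) →ₗ[k] (A ⊗[k] H) →ₗ[k] (A ⊗[k] H)) : A →ₗ[k] A ⊗[k] H :=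
  (μ.flip (smashE k H A)) ∘ₗ ((TensorProduct.mk k A H).flip 1)

/-- An ideal of the partial smash product `A # H` (in the corner model). -/
def IsSmashIdeal (μ : (A ⊗[k] H) →ₗ[k] (A ⊗[k] H) →ₗ[k] (A ⊗[k] H))
    (I : Submodule k (A ⊗[k] H)) : Prop :=
  I ≤ smashS k μ ∧ ∀ x ∈ smashS k μ, ∀ i ∈ I, μ x i ∈ I ∧ μ i x ∈ I

lemma aux_one (ξ : PartialModuleAlgebra k H A)
    (μ : (A ⊗[k] H) →ₗ[k] (A ⊗[k] H) →ₗ[k] (A ⊗[k] H)) (hμ : SmashMulFormula k ξ μ)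
    (u v : H) (a b : A) :
    μ (μ (1 ⊗ₜ u) (a ⊗ₜ 1)) (b ⊗ₜ v) = μ (1 ⊗ₜ u) ((a * b) ⊗ₜ v) := by
  let G : H ⊗[k] (H ⊗[k] H) →ₗ[k] A ⊗[k] H :=
    TensorProduct.map (LinearMap.mul' k A ∘ₗ TensorProduct.map (ξ.act.flip a) (ξ.act.flip b))
      (LinearMap.mulRight k v) ∘ₗ (TensorProduct.assoc k H H H).symm.toLinearMap
  have h1 : ∀ t : H ⊗[k] H,
      μ (TensorProduct.map (LinearMap.mulLeft k 1 ∘ₗ ξ.act.flip a) (LinearMap.mulRight k 1) t)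
        (b ⊗ₜ v) = G (Coalgebra.comul.lTensor H t) := by
    intro t
    induction t using TensorProduct.induction_on with
    | zero => simp
    | add x y hx hy => simp only [map_add, LinearMap.add_apply, hx, hy]
    | tmul p q =>
      simp only [TensorProduct.map_tmul, LinearMap.lTensor_tmul, LinearMap.comp_apply,
        LinearMap.mulLeft_apply, LinearMap.mulRight_apply, one_mul, mul_one]
      rw [hμ]
      generalize (Coalgebra.comul q : H ⊗[k] H) = s
      induction s using TensorProduct.induction_on with
      | zero => simp
      | add x y hx hy => simp only [map_add, TensorProduct.tmul_add, hx, hy]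
      | tmul q r => simp [G]
  have h2 : ∀ t : H ⊗[k] H,
      TensorProduct.map (LinearMap.mulLeft k 1 ∘ₗ ξ.act.flip (a * b)) (LinearMap.mulRight k v) t
        = G (TensorProduct.assoc k H H H (Coalgebra.comul.rTensor H t)) := by
    intro t
    induction t using TensorProduct.induction_on with
    | zero => simp
    | add x y hx hy => simp only [map_add, hx, hy]
    | tmul p q => simp [G, ξ.act_mul, sweedler]
  rw [hμ 1 a u 1, hμ, h1, h2, Coalgebra.coassoc_apply]

lemma aux_two (ξ : PartialModuleAlgebra k H A)
    (μ : (A ⊗[k] H) →ₗ[k] (A ⊗[k] H) →ₗ[k] (A ⊗[k] H)) (hμ : SmashMulFormula k ξ μ)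
    (g : H) (y : A ⊗[k] H) :
    μ y (μ (1 ⊗ₜ g) (1 ⊗ₜ 1)) = μ (μ y (1 ⊗ₜ g)) (1 ⊗ₜ 1) := by
  induction y using TensorProduct.induction_on with
  | zero => simp
  | add x y hx hy => simp only [map_add, LinearMap.add_apply, hx, hy]
  | tmul a h =>
  let K : (H ⊗[k] H) ⊗[k] H →ₗ[k] A ⊗[k] H :=
    TensorProduct.map (LinearMap.mulLeft k a ∘ₗ
      LinearMap.mul' k A ∘ₗ TensorProduct.map (ξ.act.flip 1) (ξ.act.flip 1)) LinearMap.id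
  let G : H ⊗[k] H → H ⊗[k] (H ⊗[k] H) →ₗ[k] A ⊗[k] H := fun t =>
    K ∘ₗ (TensorProduct.assoc k H H H).symm.toLinearMap ∘ₗ
      (LinearMap.mulRight k t).lTensor H
  have hadd : ∀ s t z, G (s + t) z = G s z + G t z := by
    intro s t z
    simp only [G, LinearMap.comp_apply]
    rw [← map_add, ← map_add, ← LinearMap.add_apply, ← LinearMap.lTensor_add]
    congr 4
    ext <;> simp [mul_add]
  have hzero : ∀ z, G 0 z = 0 := by
    intro z
    have := hadd 0 0 z
    simpa using this
  have h1 : ∀ t : H ⊗[k] H,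
      μ (a ⊗ₜ h) (TensorProduct.map (LinearMap.mulLeft k 1 ∘ₗ ξ.act.flip 1)
        (LinearMap.mulRight k 1) t)
        = G t (TensorProduct.assoc k H H H (Coalgebra.comul.rTensor H (Coalgebra.comul h))) := by
    intro t
    induction t using TensorProduct.induction_on with
    | zero => rw [hzero]; simp
    | add x y hx hy => simp only [map_add, hadd, hx, hy]
    | tmul p q =>
      simp only [TensorProduct.map_tmul, LinearMap.comp_apply,
        LinearMap.mulLeft_apply, LinearMap.mulRight_apply, one_mul, mul_one]
      rw [hμ]
      generalize (Coalgebra.comul h : H ⊗[k] H) = s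
      induction s using TensorProduct.induction_on with
      | zero => simp
      | add x y hx hy => simp only [map_add, hx, hy]
      | tmul s r =>
        simp only [TensorProduct.map_tmul, LinearMap.comp_apply, LinearMap.rTensor_tmul,
          LinearMap.mulLeft_apply, LinearMap.mulRight_apply, LinearMap.flip_apply, ξ.act_act,
          sweedler]
        generalize (Coalgebra.comul s : H ⊗[k] H) = w
        induction w using TensorProduct.induction_on with
        | zero => simp
        | add x y hx hy =>
          simp only [map_add, mul_add, TensorProduct.add_tmul, hx, hy]
        | tmul c d => simp [G, K]
  have h2 : ∀ t : H ⊗[k] H,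
      μ (TensorProduct.map (LinearMap.mulLeft k a ∘ₗ ξ.act.flip 1) (LinearMap.mulRight k g) t)
        (1 ⊗ₜ 1) = G (Coalgebra.comul g) (Coalgebra.comul.lTensor H t) := by
    intro t
    induction t using TensorProduct.induction_on with
    | zero => simp
    | add x y hx hy => simp only [map_add, LinearMap.add_apply, hx, hy]
    | tmul p q =>
      simp only [TensorProduct.map_tmul, LinearMap.lTensor_tmul, LinearMap.comp_apply,
        LinearMap.mulLeft_apply, LinearMap.mulRight_apply]
      rw [hμ, Bialgebra.comul_mul]
      simp only [G, LinearMap.comp_apply, LinearMap.lTensor_tmul, LinearMap.mulRight_apply]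
      generalize (Coalgebra.comul q * Coalgebra.comul g : H ⊗[k] H) = s
      induction s using TensorProduct.induction_on with
      | zero => simp
      | add x y hx hy => simp only [map_add, TensorProduct.tmul_add, hx, hy]
      | tmul q r => simp [K, mul_assoc]
  rw [hμ 1 1 g 1, hμ a 1 h g, h1, h2, Coalgebra.coassoc_apply]

lemma aux_F (ξ : PartialModuleAlgebra k H A)
    (μ : (A ⊗[k] H) →ₗ[k] (A ⊗[k] H) →ₗ[k] (A ⊗[k] H)) (hμ : SmashMulFormula k ξ μ)
    (a b : A) : μ (a ⊗ₜ 1) (b ⊗ₜ 1) = (a * b) ⊗ₜ 1 := by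
  rw [hμ, Bialgebra.comul_one, Algebra.TensorProduct.one_def]
  simp [ξ.one_act]

lemma aux_three (ξ : PartialModuleAlgebra k H A)
    (μ : (A ⊗[k] H) →ₗ[k] (A ⊗[k] H) →ₗ[k] (A ⊗[k] H)) (hμ : SmashMulFormula k ξ μ)
    (h : H) (x : A) :
    TensorProduct.lift ((μ.flip ∘ₗ TensorProduct.mk k A H x).flip ∘ₗ TensorProduct.mk k A H 1)
      ((HopfAlgebra.antipode k).lTensor H (Coalgebra.comul h)) = ξ.act h x ⊗ₜ 1 := by
  let G : H ⊗[k] (H ⊗[k] H) →ₗ[k] A ⊗[k] H :=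
    TensorProduct.map (ξ.act.flip x)
      (LinearMap.mul' k H ∘ₗ (HopfAlgebra.antipode k).lTensor H)
  have h1 : ∀ t : H ⊗[k] H,
      TensorProduct.lift ((μ.flip ∘ₗ TensorProduct.mk k A H x).flip ∘ₗ TensorProduct.mk k A H 1)
      ((HopfAlgebra.antipode k).lTensor H t)
        = G (TensorProduct.assoc k H H H (Coalgebra.comul.rTensor H t)) := by
    intro t
    induction t using TensorProduct.induction_on with
    | zero => simp
    | add x y hx hy => simp only [map_add, hx, hy]
    | tmul p q =>
      simp only [LinearMap.lTensor_tmul, LinearMap.rTensor_tmul, TensorProduct.lift.tmul,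
        LinearMap.comp_apply, LinearMap.flip_apply, TensorProduct.mk_apply]
      rw [hμ]
      generalize (Coalgebra.comul p : H ⊗[k] H) = s
      induction s using TensorProduct.induction_on with
      | zero => simp
      | add x y hx hy => simp only [map_add, TensorProduct.add_tmul, hx, hy]
      | tmul c d => simp [G]
  have h2 : ∀ t : H ⊗[k] H, G (Coalgebra.comul.lTensor H t) =
      TensorProduct.map (ξ.act.flip x) (Algebra.linearMap k H)
        (Coalgebra.counit.lTensor H t) := by
    intro t
    induction t using TensorProduct.induction_on with
    | zero => simp
    | add x y hx hy => simp only [map_add, hx, hy]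
    | tmul p q => simp [G]
  rw [h1, Coalgebra.coassoc_apply, h2, Coalgebra.lTensor_counit_comul]
  simp

/-- If `𝓘` is an ideal of the partial smash product `A # H`, then `𝓘 ∩ A` (the preimage of
`𝓘` under `a ↦ a # 1_H`) is an `H`-stable ideal of `A`. -/
theorem smashIdeal_inter_A (ξ : PartialModuleAlgebra k H A)
    (μ : (A ⊗[k] H) →ₗ[k] (A ⊗[k] H) →ₗ[k] (A ⊗[k] H)) (hμ : SmashMulFormula k ξ μ)
    (I : Submodule k (A ⊗[k] H)) (hI : IsSmashIdeal k μ I) :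
    IsIdeal k (Submodule.comap (smashF k μ) I) ∧
    Hstable k ξ (Submodule.comap (smashF k μ) I) := by
  have hF : ∀ a, smashF k μ a = a ⊗ₜ 1 := by
    intro a
    simp [smashF, smashE, aux_F k ξ μ hμ]
  have hS : ∀ y, μ y (1 ⊗ₜ 1) ∈ smashS k μ := fun y => ⟨y, rfl⟩
  have hS1 : ∀ a : A, (a ⊗ₜ[k] (1 : H)) ∈ smashS k μ := fun a => by
    have := hS (a ⊗ₜ 1)
    rwa [aux_F k ξ μ hμ, mul_one] at this
  refine ⟨?_, ?_⟩
  · intro a ha b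
    simp only [Submodule.mem_comap, hF] at ha ⊢
    have := hI.2 _ (hS1 b) _ ha
    rw [aux_F k ξ μ hμ, aux_F k ξ μ hμ] at this
    exact ⟨this.2, this.1⟩
  · intro h x hx
    simp only [Submodule.mem_comap, hF] at hx ⊢
    have key : ∀ t : H ⊗[k] H, μ (TensorProduct.lift
        ((μ.flip ∘ₗ TensorProduct.mk k A H x).flip ∘ₗ TensorProduct.mk k A H 1) t)
        (1 ⊗ₜ 1) ∈ I := by
      intro t
      induction t using TensorProduct.induction_on with
      | zero => simp
      | add x y hx hy =>
        simp only [map_add, LinearMap.add_apply]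
        exact I.add_mem hx hy
      | tmul u v =>
        have h1 := (hI.2 _ (hS (1 ⊗ₜ u)) _ hx).1
        have h2 := (hI.2 _ (hS (1 ⊗ₜ v)) _ h1).2
        rw [aux_one k ξ μ hμ, aux_two k ξ μ hμ, one_mul, aux_one k ξ μ hμ, mul_one] at h2
        simpa using h2
    have := key ((HopfAlgebra.antipode k).lTensor H (Coalgebra.comul h))
    rwa [aux_three k ξ μ hμ, aux_F k ξ μ hμ, mul_one] at this
end
end

section
/- Let H be a Hopf algebra and A a partial H-module algebra. The maps Φ(I) = I#H and Ψ(𝓘) = 𝓘 ∩ A give mutually inverse, inclusion-preserving bijections between the set of H-stable ideals of A and the set of ideals of A#H which are H-subcomodules (for the coaction a#h ↦ (a#h₁)⊗h₂), and these bijections preserve sums, finite products and intersections. -/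
open TensorProduct

noncomputable section

variable (k : Type*) [Field k]

variable {H A : Type*} [Ring H] [HopfAlgebra k H] [Ring A] [Algebra k A]

/-- The comodule structure map of `A ⊗ H`, `a ⊗ h ↦ (a ⊗ h₁) ⊗ h₂`. -/
def smashDelta : A ⊗[k] H →ₗ[k] (A ⊗[k] H) ⊗[k] H :=
  (TensorProduct.assoc k A H H).symm.toLinearMap ∘ₗ
    (TensorProduct.map LinearMap.id Coalgebra.comul)

/-- A subspace of `A ⊗ H` which is an `H`-subcomodule. -/
def IsSubcomodule (I : Submodule k (A ⊗[k] H)) : Prop :=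
  ∀ i ∈ I, smashDelta k i ∈
    LinearMap.range (TensorProduct.map I.subtype (LinearMap.id : H →ₗ[k] H))

/-- `Φ(I) = I # H`, the span of the elements `x # h` with `x ∈ I`. -/
def smashPhi (μ : (A ⊗[k] H) →ₗ[k] (A ⊗[k] H) →ₗ[k] (A ⊗[k] H)) (I : Submodule k A) :
    Submodule k (A ⊗[k] H) :=
  Submodule.span k {z | ∃ x ∈ I, ∃ h : H, z = μ (x ⊗ₜ[k] h) (smashE k H A)}

/-- `Ψ(𝓘) = 𝓘 ∩ A` (via the embedding `a ↦ a # 1_H`). -/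
def smashPsi (μ : (A ⊗[k] H) →ₗ[k] (A ⊗[k] H) →ₗ[k] (A ⊗[k] H))
    (J : Submodule k (A ⊗[k] H)) : Submodule k A :=
  Submodule.comap (smashF k μ) J

/-- The product of two ideals of `A`. -/
def idealProd (I J : Submodule k A) : Submodule k A :=
  Submodule.span k {z | ∃ a ∈ I, ∃ b ∈ J, z = a * b}

/-- The product of two ideals of `A # H`. -/
def smashProd (μ : (A ⊗[k] H) →ₗ[k] (A ⊗[k] H) →ₗ[k] (A ⊗[k] H))
    (I J : Submodule k (A ⊗[k] H)) : Submodule k (A ⊗[k] H) :=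
  Submodule.span k {z | ∃ i ∈ I, ∃ j ∈ J, z = μ i j}

theorem sw_assoc {B : Type*} [Ring B] [Algebra k B] (f g l : H →ₗ[k] B) :
    sweedler k (sweedler k f g) l = sweedler k f (sweedler k g l) :=
  congrArg WithConv.ofConv
    (mul_assoc (WithConv.toConv f) (WithConv.toConv g) (WithConv.toConv l))

theorem sw_apply {B : Type*} [Ring B] [Algebra k B] (f g : H →ₗ[k] B) {ι : Type*} {h : H}
    (r : Coalgebra.Repr k h ι) :
    sweedler k f g h = ∑ i ∈ r.index, f (r.left i) * g (r.right i) := by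
  simp [sweedler, ← r.eq]

theorem sw_comp {B C : Type*} [Ring B] [Algebra k B] [Ring C] [Algebra k C] (φ : B →ₐ[k] C)
    (f g : H →ₗ[k] B) :
    φ.toLinearMap ∘ₗ sweedler k f g = sweedler k (φ.toLinearMap ∘ₗ f) (φ.toLinearMap ∘ₗ g) := by
  ext h
  simp [sw_apply k _ _ (Coalgebra.Repr.arbitrary k h)]

theorem sw_unit {B : Type*} [Ring B] [Algebra k B] (f : H →ₗ[k] B) :
    sweedler k f (Algebra.linearMap k B ∘ₗ Coalgebra.counit) = f :=
  congrArg WithConv.ofConv (mul_one (WithConv.toConv f))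

theorem sw_antipode : sweedler k (LinearMap.id : H →ₗ[k] H) (HopfAlgebra.antipode k) =
    Algebra.linearMap k H ∘ₗ Coalgebra.counit := by
  ext h
  rw [sw_apply k _ _ (Coalgebra.Repr.arbitrary k h)]
  simpa using HopfAlgebra.sum_mul_antipode_eq_algebraMap_counit (Coalgebra.Repr.arbitrary k h)

variable (H A) in
/-- left inclusion -/
def iL : A →ₐ[k] A ⊗[k] H := Algebra.TensorProduct.includeLeft

variable (H A) in
/-- right inclusion -/
def iR : H →ₐ[k] A ⊗[k] H := Algebra.TensorProduct.includeRight

theorem mu_sum {ξ : PartialModuleAlgebra k H A}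
    {μ : (A ⊗[k] H) →ₗ[k] (A ⊗[k] H) →ₗ[k] (A ⊗[k] H)} (hμ : SmashMulFormula k ξ μ)
    {ι : Type*} {h : H} (r : Coalgebra.Repr k h ι) (a b : A) (g : H) :
    μ (a ⊗ₜ[k] h) (b ⊗ₜ[k] g) =
      ∑ i ∈ r.index, (a * ξ.act (r.left i) b) ⊗ₜ[k] (r.right i * g) := by
  rw [hμ, ← r.eq]
  simp

theorem mu_eq {ξ : PartialModuleAlgebra k H A}
    {μ : (A ⊗[k] H) →ₗ[k] (A ⊗[k] H) →ₗ[k] (A ⊗[k] H)} (hμ : SmashMulFormula k ξ μ)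
    (a b : A) (h g : H) :
    μ (a ⊗ₜ[k] h) (b ⊗ₜ[k] g) = (a ⊗ₜ[k] (1 : H)) *
      sweedler k ((iL k H A).toLinearMap ∘ₗ ξ.act.flip b) (iR k H A).toLinearMap h
        * ((1 : A) ⊗ₜ[k] g) := by
  rw [mu_sum k hμ (Coalgebra.Repr.arbitrary k h), sw_apply k _ _ (Coalgebra.Repr.arbitrary k h)]
  simp [iL, iR, Finset.mul_sum, Finset.sum_mul]

theorem act_mul_act (ξ : PartialModuleAlgebra k H A) (g : H) (b c : A) :
    ξ.act.flip (b * ξ.act g c) =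
      sweedler k (ξ.act.flip b) ((ξ.act.flip c) ∘ₗ LinearMap.mulRight k g) := by
  have h1 : ∀ x y : A, ξ.act.flip (x * y) = sweedler k (ξ.act.flip x) (ξ.act.flip y) :=
    fun x y => by ext h; exact ξ.act_mul h x y
  have h2 : ξ.act.flip (ξ.act g c) =
      sweedler k (ξ.act.flip 1) ((ξ.act.flip c) ∘ₗ LinearMap.mulRight k g) := by
    ext h; exact ξ.act_act h g c
  rw [h1, h2, ← sw_assoc, ← h1, mul_one]

theorem mu_mul_right {ξ : PartialModuleAlgebra k H A}
    {μ : (A ⊗[k] H) →ₗ[k] (A ⊗[k] H) →ₗ[k] (A ⊗[k] H)} (hμ : SmashMulFormula k ξ μ)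
    {ι : Type*} {g : H} (r : Coalgebra.Repr k g ι) (a c : A) (h l : H) :
    μ (a ⊗ₜ[k] (h * g)) (c ⊗ₜ[k] l) = ∑ i ∈ r.index, (a ⊗ₜ[k] (1 : H)) *
      sweedler k ((iL k H A).toLinearMap ∘ₗ ξ.act.flip c ∘ₗ LinearMap.mulRight k (r.left i))
        (iR k H A).toLinearMap h * ((1 : A) ⊗ₜ[k] (r.right i * l)) := by
  rw [hμ, Bialgebra.comul_mul, ← r.eq, ← (Coalgebra.Repr.arbitrary k h).eq]
  simp_rw [sw_apply k _ _ (Coalgebra.Repr.arbitrary k h)]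
  simp only [map_sum, Finset.mul_sum, Finset.sum_mul]
  simp [iL, iR, mul_assoc]

theorem mu_assoc {ξ : PartialModuleAlgebra k H A}
    {μ : (A ⊗[k] H) →ₗ[k] (A ⊗[k] H) →ₗ[k] (A ⊗[k] H)} (hμ : SmashMulFormula k ξ μ)
    (x y z : A ⊗[k] H) : μ (μ x y) z = μ x (μ y z) := by
  induction x with
  | zero => simp
  | add x x' hx hx' => simp only [map_add, LinearMap.add_apply, hx, hx']
  | tmul a h =>
  induction y with
  | zero => simp
  | add x x' hx hx' => simp only [map_add, LinearMap.add_apply, hx, hx']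
  | tmul b g =>
  induction z with
  | zero => simp
  | add x x' hx hx' => simp only [map_add, hx, hx']
  | tmul c l =>
  rw [mu_sum k hμ (Coalgebra.Repr.arbitrary k h), mu_sum k hμ (Coalgebra.Repr.arbitrary k g)]
  simp only [map_sum, LinearMap.sum_apply, mu_mul_right k hμ (Coalgebra.Repr.arbitrary k g)]
  rw [Finset.sum_comm]
  refine Finset.sum_congr rfl fun i _ => ?_
  rw [mu_eq k hμ, act_mul_act, sw_comp, sw_assoc,
    sw_apply k _ (sweedler k _ _) (Coalgebra.Repr.arbitrary k h)]
  simp only [Finset.mul_sum, Finset.sum_mul]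
  refine Finset.sum_congr rfl fun j _ => ?_
  simp [iL, ← mul_assoc]

theorem mu_e_left {ξ : PartialModuleAlgebra k H A}
    {μ : (A ⊗[k] H) →ₗ[k] (A ⊗[k] H) →ₗ[k] (A ⊗[k] H)} (hμ : SmashMulFormula k ξ μ)
    (x : A ⊗[k] H) : μ (smashE k H A) x = x := by
  induction x with
  | zero => simp
  | add x x' hx hx' => simp only [map_add, hx, hx']
  | tmul a h =>
  rw [smashE, hμ]
  simp [ξ.one_act, Algebra.TensorProduct.one_def]

theorem mu_one {ξ : PartialModuleAlgebra k H A}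
    {μ : (A ⊗[k] H) →ₗ[k] (A ⊗[k] H) →ₗ[k] (A ⊗[k] H)} (hμ : SmashMulFormula k ξ μ)
    (a b : A) (h : H) : μ (a ⊗ₜ[k] (1 : H)) (b ⊗ₜ[k] h) = (a * b) ⊗ₜ[k] h := by
  rw [hμ]
  simp [ξ.one_act, Algebra.TensorProduct.one_def]

theorem mu_antipode {ξ : PartialModuleAlgebra k H A}
    {μ : (A ⊗[k] H) →ₗ[k] (A ⊗[k] H) →ₗ[k] (A ⊗[k] H)} (hμ : SmashMulFormula k ξ μ)
    {ι : Type*} {h : H} (r : Coalgebra.Repr k h ι) (a b : A) :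
    ∑ i ∈ r.index, μ (a ⊗ₜ[k] r.left i) (b ⊗ₜ[k] HopfAlgebra.antipode k (r.right i)) =
      (a * ξ.act h b) ⊗ₜ[k] (1 : H) := by
  have h1 : sweedler k (sweedler k ((iL k H A).toLinearMap ∘ₗ ξ.act.flip b) (iR k H A).toLinearMap)
      ((iR k H A).toLinearMap ∘ₗ HopfAlgebra.antipode k) =
      (iL k H A).toLinearMap ∘ₗ ξ.act.flip b := by
    rw [sw_assoc]
    have h2 := sw_comp k (iR k H A) (LinearMap.id : H →ₗ[k] H) (HopfAlgebra.antipode k)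
    rw [LinearMap.comp_id] at h2
    rw [← h2, sw_antipode]
    convert sw_unit k ((iL k H A).toLinearMap ∘ₗ ξ.act.flip b) using 2
    ext x
    simp
  have h3 := congrArg (fun z => (a ⊗ₜ[k] (1 : H)) * z) (LinearMap.congr_fun h1 h)
  simp only [sw_apply k _ (_ ∘ₗ _) r, Finset.mul_sum] at h3
  simp only [mu_eq k hμ]
  simpa [iL, iR, mul_assoc] using h3

variable (H) in
/-- The image of `I ⊗ H` in `M ⊗ H`. -/
def RR {M : Type*} [AddCommGroup M] [Module k M] (I : Submodule k M) : Submodule k (M ⊗[k] H) :=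
  LinearMap.range (TensorProduct.map I.subtype (LinearMap.id : H →ₗ[k] H))

theorem RR_le {M : Type*} [AddCommGroup M] [Module k M] {I : Submodule k M}
    {L : Submodule k (M ⊗[k] H)} (hL : ∀ x ∈ I, ∀ h : H, x ⊗ₜ[k] h ∈ L) : RR k H I ≤ L := by
  rintro _ ⟨z, rfl⟩
  induction z with
  | zero => simp
  | add x y hx hy => rw [map_add]; exact L.add_mem hx hy
  | tmul x h => exact hL x x.2 h

theorem tmul_mem_RR {M : Type*} [AddCommGroup M] [Module k M] {I : Submodule k M} {x : M}
    (hx : x ∈ I) (h : H) : x ⊗ₜ[k] h ∈ RR k H I := ⟨(⟨x, hx⟩ : I) ⊗ₜ h, rfl⟩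

theorem mem_RR_top {M : Type*} [AddCommGroup M] [Module k M] (z : M ⊗[k] H) :
    z ∈ RR k H (⊤ : Submodule k M) := by
  induction z with
  | zero => exact Submodule.zero_mem _
  | add x y hx hy => exact Submodule.add_mem _ hx hy
  | tmul x h => exact tmul_mem_RR k Submodule.mem_top h

theorem RR_mono {M : Type*} [AddCommGroup M] [Module k M] {I I' : Submodule k M} (h : I ≤ I') :
    RR k H I ≤ RR k H I' := RR_le k fun _ hx g => tmul_mem_RR k (h hx) g

theorem RR_map {M N : Type*} [AddCommGroup M] [Module k M] [AddCommGroup N] [Module k N]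
    {I : Submodule k M} {I' : Submodule k N} (T : M →ₗ[k] N) (hT : ∀ x ∈ I, T x ∈ I')
    {z : M ⊗[k] H} (hz : z ∈ RR k H I) : T.rTensor H z ∈ RR k H I' := by
  have : RR k H I ≤ (RR k H I').comap (T.rTensor H) :=
    RR_le k fun x hx h => tmul_mem_RR k (hT x hx) h
  exact this hz

theorem RR_slice {M : Type*} [AddCommGroup M] [Module k M] {I : Submodule k M} (f : H →ₗ[k] k)
    {z : M ⊗[k] H} (hz : z ∈ RR k H I) : TensorProduct.rid k M (f.lTensor M z) ∈ I := by
  have : RR k H I ≤ I.comap ((TensorProduct.rid k M).toLinearMap ∘ₗ f.lTensor M) :=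
    RR_le k fun x hx h => by simpa using I.smul_mem _ hx
  exact this hz

theorem RR_iInf {M : Type*} [AddCommGroup M] [Module k M] {ι : Type*} (F : ι → Submodule k M)
    {z : M ⊗[k] H} (hz : ∀ i, z ∈ RR k H (F i)) : z ∈ RR k H (⨅ i, F i) := by
  classical
  let B := Module.Basis.ofVectorSpace k H
  obtain ⟨b, hb⟩ := TensorProduct.eq_repr_basis_right B z
  rw [← hb]
  refine Submodule.sum_mem _ fun j _ => tmul_mem_RR k ?_ _
  rw [Submodule.mem_iInf]
  intro i
  have := RR_slice k (B.coord j) (hz i)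
  rw [← hb] at this
  have h2 : (if b j = 0 then 0 else b j) = b j := by
    split_ifs with h
    · exact h.symm
    · rfl
  rw [← h2]
  simpa [Finsupp.sum, Finsupp.single_apply] using this

theorem RR_mu {ξ : PartialModuleAlgebra k H A}
    {μ : (A ⊗[k] H) →ₗ[k] (A ⊗[k] H) →ₗ[k] (A ⊗[k] H)} (hμ : SmashMulFormula k ξ μ)
    {I I' K : Submodule k A} (hK : ∀ x ∈ I, ∀ y ∈ I', ∀ h, x * ξ.act h y ∈ K)
    {z w : A ⊗[k] H} (hz : z ∈ RR k H I) (hw : w ∈ RR k H I') : μ z w ∈ RR k H K := by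
  have : RR k H I ≤ (RR k H K).comap (μ.flip w) := by
    refine RR_le k fun x hx h => ?_
    have : RR k H I' ≤ (RR k H K).comap (μ (x ⊗ₜ h)) := by
      refine RR_le k fun y hy g => ?_
      rw [Submodule.mem_comap, mu_sum k hμ (Coalgebra.Repr.arbitrary k h)]
      exact Submodule.sum_mem _ fun i _ => tmul_mem_RR k (hK x hx y hy _) _
    exact this hw
  exact this hz

theorem mu_ee {ξ : PartialModuleAlgebra k H A}
    {μ : (A ⊗[k] H) →ₗ[k] (A ⊗[k] H) →ₗ[k] (A ⊗[k] H)} (hμ : SmashMulFormula k ξ μ)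
    (z : A ⊗[k] H) : μ (μ z (smashE k H A)) (smashE k H A) = μ z (smashE k H A) := by
  rw [mu_assoc k hμ, mu_e_left k hμ]

theorem mem_S {ξ : PartialModuleAlgebra k H A}
    {μ : (A ⊗[k] H) →ₗ[k] (A ⊗[k] H) →ₗ[k] (A ⊗[k] H)} (hμ : SmashMulFormula k ξ μ)
    (z : A ⊗[k] H) : z ∈ smashS k μ ↔ μ z (smashE k H A) = z := by
  constructor
  · rintro ⟨w, rfl⟩
    exact mu_ee k hμ w
  · intro h
    exact ⟨z, h⟩

theorem RR_to_Phi {μ : (A ⊗[k] H) →ₗ[k] (A ⊗[k] H) →ₗ[k] (A ⊗[k] H)}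
    {I : Submodule k A} {z : A ⊗[k] H} (hz : z ∈ RR k H I) :
    μ z (smashE k H A) ∈ smashPhi k μ I := by
  have : RR k H I ≤ (smashPhi k μ I).comap (μ.flip (smashE k H A)) :=
    RR_le k fun x hx h => Submodule.subset_span ⟨x, hx, h, rfl⟩
  exact this hz

theorem mem_Phi {ξ : PartialModuleAlgebra k H A}
    {μ : (A ⊗[k] H) →ₗ[k] (A ⊗[k] H) →ₗ[k] (A ⊗[k] H)} (hμ : SmashMulFormula k ξ μ)
    {I : Submodule k A} (hI : IsIdeal k I) (z : A ⊗[k] H) :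
    z ∈ smashPhi k μ I ↔ z ∈ RR k H I ∧ μ z (smashE k H A) = z := by
  constructor
  · intro h
    have h1 : smashPhi k μ I ≤ RR k H I ⊓ smashS k μ := by
      refine Submodule.span_le.2 ?_
      rintro _ ⟨x, hx, h, rfl⟩
      refine ⟨RR_mu k hμ (I' := ⊤) (fun x hx y _ h => (hI x hx _).1) (tmul_mem_RR k hx h)
        (mem_RR_top k _), ⟨_, rfl⟩⟩
    exact ⟨(h1 h).1, (mem_S k hμ z).1 (h1 h).2⟩
  · rintro ⟨h1, h2⟩
    rw [← h2]
    exact RR_to_Phi k h1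

theorem smashF_eq {ξ : PartialModuleAlgebra k H A}
    {μ : (A ⊗[k] H) →ₗ[k] (A ⊗[k] H) →ₗ[k] (A ⊗[k] H)} (hμ : SmashMulFormula k ξ μ)
    (a : A) : smashF k μ a = a ⊗ₜ[k] (1 : H) := by
  have := mu_one k hμ a 1 1
  rw [mul_one] at this
  exact this

theorem mem_Psi {ξ : PartialModuleAlgebra k H A}
    {μ : (A ⊗[k] H) →ₗ[k] (A ⊗[k] H) →ₗ[k] (A ⊗[k] H)} (hμ : SmashMulFormula k ξ μ)
    (J : Submodule k (A ⊗[k] H)) (a : A) :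
    a ∈ smashPsi k μ J ↔ a ⊗ₜ[k] (1 : H) ∈ J := by
  rw [smashPsi, Submodule.mem_comap, smashF_eq k hμ]

theorem delta_sum {ι : Type*} {h : H} (r : Coalgebra.Repr k h ι) (a : A) :
    smashDelta k (a ⊗ₜ[k] h) = ∑ i ∈ r.index, (a ⊗ₜ[k] r.left i) ⊗ₜ[k] r.right i := by
  simp [smashDelta, ← r.eq, tmul_sum]

theorem delta_P {ξ : PartialModuleAlgebra k H A}
    {μ : (A ⊗[k] H) →ₗ[k] (A ⊗[k] H) →ₗ[k] (A ⊗[k] H)} (hμ : SmashMulFormula k ξ μ)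
    (z : A ⊗[k] H) : smashDelta k (μ z (smashE k H A)) =
      (μ.flip (smashE k H A)).rTensor H (smashDelta k z) := by
  induction z with
  | zero => simp
  | add x y hx hy => simp only [map_add, LinearMap.add_apply, hx, hy]
  | tmul a h =>
  let j1 := (iL k H (A ⊗[k] H)).toLinearMap ∘ₗ (iL k H A).toLinearMap ∘ₗ ξ.act.flip 1
  let j2 := (iL k H (A ⊗[k] H)).toLinearMap ∘ₗ (iR k H A).toLinearMap
  let j3 := (iR k H (A ⊗[k] H)).toLinearMap
  have hc := congrArg (fun z => ((a ⊗ₜ[k] (1 : H)) ⊗ₜ[k] (1 : H)) * z)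
    (LinearMap.congr_fun (sw_assoc k j1 j2 j3) h)
  have e1 : smashDelta k (μ (a ⊗ₜ[k] h) (smashE k H A)) =
      ((a ⊗ₜ[k] (1 : H)) ⊗ₜ[k] (1 : H)) * sweedler k j1 (sweedler k j2 j3) h := by
    rw [smashE, mu_sum k hμ (Coalgebra.Repr.arbitrary k h), map_sum,
      sw_apply k j1 _ (Coalgebra.Repr.arbitrary k h), Finset.mul_sum]
    refine Finset.sum_congr rfl fun i _ => ?_
    rw [mul_one, delta_sum k (Coalgebra.Repr.arbitrary k _),
      sw_apply k j2 _ (Coalgebra.Repr.arbitrary k _), Finset.mul_sum, Finset.mul_sum]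
    refine Finset.sum_congr rfl fun j _ => ?_
    simp [j1, j2, j3, iL, iR]
  have e2 : (μ.flip (smashE k H A)).rTensor H (smashDelta k (a ⊗ₜ[k] h)) =
      ((a ⊗ₜ[k] (1 : H)) ⊗ₜ[k] (1 : H)) * sweedler k (sweedler k j1 j2) j3 h := by
    rw [delta_sum k (Coalgebra.Repr.arbitrary k h), map_sum,
      sw_apply k _ j3 (Coalgebra.Repr.arbitrary k h), Finset.mul_sum]
    refine Finset.sum_congr rfl fun i _ => ?_
    rw [LinearMap.rTensor_tmul, LinearMap.flip_apply, smashE,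
      mu_sum k hμ (Coalgebra.Repr.arbitrary k _),
      sw_apply k j1 _ (Coalgebra.Repr.arbitrary k _), Finset.sum_mul, Finset.mul_sum, sum_tmul]
    refine Finset.sum_congr rfl fun j _ => ?_
    simp [j1, j2, j3, iL, iR]
  rw [e1, e2]
  exact hc.symm

theorem part1 {ξ : PartialModuleAlgebra k H A}
    {μ : (A ⊗[k] H) →ₗ[k] (A ⊗[k] H) →ₗ[k] (A ⊗[k] H)} (hμ : SmashMulFormula k ξ μ)
    (I : Submodule k A) (hI : IsIdeal k I) (hs : Hstable k ξ I) :
      IsSmashIdeal k μ (smashPhi k μ I) ∧ IsSubcomodule k (smashPhi k μ I) ∧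
      smashPsi k μ (smashPhi k μ I) = I := by
  refine ⟨⟨?_, ?_⟩, ?_, ?_⟩
  · intro z hz
    exact (mem_S k hμ z).2 ((mem_Phi k hμ hI z).1 hz).2
  · intro x hx i hi
    rw [mem_S k hμ] at hx
    rw [mem_Phi k hμ hI] at hi
    rw [mem_Phi k hμ hI, mem_Phi k hμ hI, mu_assoc k hμ, mu_assoc k hμ, hi.2, hx]
    exact ⟨⟨RR_mu k hμ (I := ⊤) (fun x _ y hy h => (hI _ (hs h y hy) x).2) (mem_RR_top k _) hi.1,
      rfl⟩, RR_mu k hμ (I' := ⊤) (fun x hx y _ h => (hI x hx _).1) hi.1 (mem_RR_top k _), rfl⟩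
  · intro z hz
    have hz' := (mem_Phi k hμ hI z).1 hz
    rw [← hz'.2, delta_P k hμ]
    have h1 : RR k H I ≤ (RR k H (RR k H I)).comap (smashDelta k) := by
      refine RR_le k fun x hx h => ?_
      rw [Submodule.mem_comap, delta_sum k (Coalgebra.Repr.arbitrary k h)]
      exact Submodule.sum_mem _ fun i _ => tmul_mem_RR k (tmul_mem_RR k hx _) _
    exact RR_map k _ (fun x hx => RR_to_Phi k hx) (h1 hz'.1)
  · ext a
    rw [mem_Psi k hμ, mem_Phi k hμ hI]
    constructor
    · rintro ⟨h, -⟩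
      simpa using RR_slice k Coalgebra.counit h
    · intro ha
      refine ⟨tmul_mem_RR k ha _, ?_⟩
      rw [smashE, mu_one k hμ, mul_one]

theorem part2 {ξ : PartialModuleAlgebra k H A}
    {μ : (A ⊗[k] H) →ₗ[k] (A ⊗[k] H) →ₗ[k] (A ⊗[k] H)} (hμ : SmashMulFormula k ξ μ)
    (J : Submodule k (A ⊗[k] H)) (hJ : IsSmashIdeal k μ J) (hc : IsSubcomodule k J) :
      IsIdeal k (smashPsi k μ J) ∧ Hstable k ξ (smashPsi k μ J) ∧
      smashPhi k μ (smashPsi k μ J) = J := by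
  have hL : ∀ x, ∀ j ∈ J, μ x j ∈ J := by
    intro x j hj
    have := (hJ.2 (μ x (smashE k H A)) ⟨x, rfl⟩ j hj).1
    rwa [mu_assoc k hμ, mu_e_left k hμ] at this
  have hR : ∀ x, ∀ j ∈ J, μ (μ j x) (smashE k H A) ∈ J := by
    intro x j hj
    rw [mu_assoc k hμ]
    exact (hJ.2 (μ x (smashE k H A)) ⟨x, rfl⟩ j hj).2
  have hid : IsIdeal k (smashPsi k μ J) := by
    intro a ha b
    rw [mem_Psi k hμ] at ha
    rw [mem_Psi k hμ, mem_Psi k hμ]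
    have h1 := hR (b ⊗ₜ[k] (1 : H)) _ ha
    have h2 := hL (b ⊗ₜ[k] (1 : H)) _ ha
    rw [mu_one k hμ, smashE, mu_one k hμ, mul_one] at h1
    rw [mu_one k hμ] at h2
    exact ⟨h1, h2⟩
  refine ⟨hid, ?_, ?_⟩
  · intro h a ha
    rw [mem_Psi k hμ] at ha ⊢
    have h1 := mu_antipode k hμ (Coalgebra.Repr.arbitrary k h) 1 a
    have h2 := congrArg (fun z => μ z (smashE k H A)) h1
    simp only [map_sum, LinearMap.sum_apply, one_mul] at h2
    have h3 : μ (ξ.act h a ⊗ₜ[k] (1 : H)) (smashE k H A) = ξ.act h a ⊗ₜ[k] (1 : H) := by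
      rw [smashE, mu_one k hμ, mul_one]
    rw [h3] at h2
    rw [← h2]
    refine Submodule.sum_mem _ fun i _ => ?_
    rw [mu_assoc k hμ]
    refine hL _ _ ?_
    have h4 := hR (1 ⊗ₜ[k] HopfAlgebra.antipode k ((Coalgebra.Repr.arbitrary k h).right i)) _ ha
    rwa [mu_one k hμ, mul_one] at h4
  · apply le_antisymm
    · refine Submodule.span_le.2 ?_
      rintro _ ⟨a, ha, h, rfl⟩
      have h1 := hR (1 ⊗ₜ[k] h) _ ((mem_Psi k hμ J a).1 ha)
      rwa [mu_one k hμ, mul_one] at h1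
    · intro j hj
      have hjS := (mem_S k hμ j).1 (hJ.1 hj)
      rw [mem_Phi k hμ hid]
      refine ⟨?_, hjS⟩
      let T : A ⊗[k] H →ₗ[k] A := LinearMap.mul' k A ∘ₗ (ξ.act.flip 1).lTensor A
      let E : (A ⊗[k] H) ⊗[k] H →ₗ[k] A ⊗[k] H :=
        μ.flip (smashE k H A) ∘ₗ TensorProduct.lift (μ.compl₂
          ((TensorProduct.mk k A H 1) ∘ₗ HopfAlgebra.antipode k))
      have hE : ∀ z, E (smashDelta k z) = T z ⊗ₜ[k] (1 : H) := by
        intro z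
        induction z with
        | zero => simp
        | add x y hx hy => simp only [map_add, hx, hy, add_tmul]
        | tmul a h =>
        have h1 := congrArg (fun z => μ z (smashE k H A))
          (mu_antipode k hμ (Coalgebra.Repr.arbitrary k h) a 1)
        simp only [map_sum, LinearMap.sum_apply] at h1
        rw [delta_sum k (Coalgebra.Repr.arbitrary k h), map_sum]
        refine Eq.trans h1 ?_
        rw [smashE, mu_one k hμ, mul_one]
        rfl
      have hT : ∀ z ∈ J, T z ∈ smashPsi k μ J := by
        intro z hz
        rw [mem_Psi k hμ, ← hE]
        have h1 : RR k H J ≤ J.comap E := RR_le k fun x hx h => hR _ _ hx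
        exact h1 (hc z hz)
      have hTd : ∀ z, T.rTensor H (smashDelta k z) = μ z (smashE k H A) := by
        intro z
        induction z with
        | zero => simp
        | add x y hx hy => simp only [map_add, hx, hy, LinearMap.add_apply]
        | tmul a h =>
        rw [delta_sum k (Coalgebra.Repr.arbitrary k h), smashE,
          mu_sum k hμ (Coalgebra.Repr.arbitrary k h), map_sum]
        simp [T]
      rw [← hjS, ← hTd]
      exact RR_map k T hT (hc j hj)

theorem Phi_mono {μ : (A ⊗[k] H) →ₗ[k] (A ⊗[k] H) →ₗ[k] (A ⊗[k] H)}
    {I I' : Submodule k A} (h : I ≤ I') : smashPhi k μ I ≤ smashPhi k μ I' :=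
  Submodule.span_mono fun _ ⟨x, hx, g, e⟩ => ⟨x, h hx, g, e⟩

theorem Psi_mono {μ : (A ⊗[k] H) →ₗ[k] (A ⊗[k] H) →ₗ[k] (A ⊗[k] H)}
    {I I' : Submodule k (A ⊗[k] H)} (h : I ≤ I') : smashPsi k μ I ≤ smashPsi k μ I' :=
  Submodule.comap_mono h

/-- The one-to-one correspondence `I ↦ I # H`, `𝓘 ↦ 𝓘 ∩ A` between `H`-stable ideals of `A`
and ideals of `A # H` which are `H`-subcomodules; the two maps are mutually inverse and
preserve inclusions, sums, (finite) products and intersections. -/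
theorem smash_ideal_correspondence (ξ : PartialModuleAlgebra k H A)
    (μ : (A ⊗[k] H) →ₗ[k] (A ⊗[k] H) →ₗ[k] (A ⊗[k] H)) (hμ : SmashMulFormula k ξ μ) :
    -- `Φ` is well defined and `Ψ ∘ Φ = id`
    (∀ I : Submodule k A, IsIdeal k I → Hstable k ξ I →
      IsSmashIdeal k μ (smashPhi k μ I) ∧ IsSubcomodule k (smashPhi k μ I) ∧
      smashPsi k μ (smashPhi k μ I) = I) ∧
    -- `Ψ` is well defined and `Φ ∘ Ψ = id`
    (∀ J : Submodule k (A ⊗[k] H), IsSmashIdeal k μ J → IsSubcomodule k J →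
      IsIdeal k (smashPsi k μ J) ∧ Hstable k ξ (smashPsi k μ J) ∧
      smashPhi k μ (smashPsi k μ J) = J) ∧
    -- `Φ` preserves (and reflects) inclusions
    (∀ I I' : Submodule k A, IsIdeal k I → Hstable k ξ I → IsIdeal k I' → Hstable k ξ I' →
      (I ≤ I' ↔ smashPhi k μ I ≤ smashPhi k μ I')) ∧
    -- `Φ` preserves sums
    (∀ (ι : Type) (F : ι → Submodule k A), (∀ i, IsIdeal k (F i) ∧ Hstable k ξ (F i)) →
      smashPhi k μ (⨆ i, F i) = ⨆ i, smashPhi k μ (F i)) ∧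
    -- `Φ` preserves (finite) products
    (∀ I I' : Submodule k A, IsIdeal k I → Hstable k ξ I → IsIdeal k I' → Hstable k ξ I' →
      smashPhi k μ (idealProd k I I') = smashProd k μ (smashPhi k μ I) (smashPhi k μ I')) ∧
    -- `Φ` preserves intersections
    (∀ (ι : Type) [Nonempty ι] (F : ι → Submodule k A),
      (∀ i, IsIdeal k (F i) ∧ Hstable k ξ (F i)) →
      smashPhi k μ (⨅ i, F i) = ⨅ i, smashPhi k μ (F i)) := by
  refine ⟨part1 k hμ, part2 k hμ, ?_, ?_, ?_, ?_⟩
  · intro I I' hI hs hI' hs'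
    refine ⟨Phi_mono k, fun h => ?_⟩
    rw [← (part1 k hμ I hI hs).2.2, ← (part1 k hμ I' hI' hs').2.2]
    exact Psi_mono k h
  · intro ι F hF
    apply le_antisymm
    · refine Submodule.span_le.2 ?_
      rintro _ ⟨x, hx, h, rfl⟩
      have : (⨆ i, F i) ≤ (⨆ i, smashPhi k μ (F i)).comap
          (μ.flip (smashE k H A) ∘ₗ (TensorProduct.mk k A H).flip h) := by
        refine iSup_le fun i y hy => ?_
        exact Submodule.mem_iSup_of_mem i (Submodule.subset_span ⟨y, hy, h, rfl⟩)
      exact this hx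
    · exact iSup_le fun i => Phi_mono k (le_iSup F i)
  · intro I I' hI hs hI' hs'
    apply le_antisymm
    · refine Submodule.span_le.2 ?_
      rintro _ ⟨x, hx, h, rfl⟩
      have : idealProd k I I' ≤ (smashProd k μ (smashPhi k μ I) (smashPhi k μ I')).comap
          (μ.flip (smashE k H A) ∘ₗ (TensorProduct.mk k A H).flip h) := by
        refine Submodule.span_le.2 ?_
        rintro _ ⟨a, ha, b, hb, rfl⟩
        refine Submodule.subset_span ⟨a ⊗ₜ 1, ?_, μ (b ⊗ₜ h) (smashE k H A),
          RR_to_Phi k (tmul_mem_RR k hb h), ?_⟩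
        · rw [mem_Phi k hμ hI, smashE, mu_one k hμ, mul_one]
          exact ⟨tmul_mem_RR k ha _, rfl⟩
        · rw [← mu_assoc k hμ, mu_one k hμ]
          rfl
      exact this hx
    · refine Submodule.span_le.2 ?_
      rintro _ ⟨i, hi, j, hj, rfl⟩
      rw [mem_Phi k hμ hI] at hi
      rw [mem_Phi k hμ hI'] at hj
      rw [← hj.2, ← mu_assoc k hμ]
      exact RR_to_Phi k (RR_mu k hμ (K := idealProd k I I')
        (fun x hx y hy h => Submodule.subset_span ⟨x, hx, _, hs' h y hy, rfl⟩) hi.1 hj.1)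
  · intro ι _ F hF
    apply le_antisymm
    · exact le_iInf fun i => Phi_mono k (iInf_le F i)
    · intro z hz
      rw [Submodule.mem_iInf] at hz
      have h := fun i => (mem_Phi k hμ (hF i).1 z).1 (hz i)
      rw [← (h (Classical.arbitrary ι)).2]
      exact RR_to_Phi k (RR_iInf k F fun i => (h i).1)
end
end

section
/- Let A be a partial H-module algebra and 𝔭 ⊊ A an H-stable ideal. Then 𝔭 is H-prime if and only if for all a, b ∈ A, (H·a)A(H·b) ⊆ 𝔭 implies a ∈ 𝔭 or b ∈ 𝔭. -/
open TensorProduct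

noncomputable section

variable (k : Type*) [Field k]

variable {H A : Type*} [Ring H] [HopfAlgebra k H] [Ring A] [Algebra k A]

/-- An `H`-prime ideal: a proper `H`-stable ideal `𝔭` such that for all `H`-stable ideals
`I, J`, `IJ ⊆ 𝔭` implies `I ⊆ 𝔭` or `J ⊆ 𝔭`. -/
def IsHPrime (ξ : PartialModuleAlgebra k H A) (p : Submodule k A) : Prop :=
  IsIdeal k p ∧ Hstable k ξ p ∧ p ≠ ⊤ ∧
    ∀ I J : Submodule k A, IsIdeal k I → Hstable k ξ I → IsIdeal k J → Hstable k ξ J →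
      idealProd k I J ≤ p → I ≤ p ∨ J ≤ p

/-- An `H`-semiprime ideal: a proper `H`-stable ideal `𝔰` such that `I² ⊆ 𝔰` implies
`I ⊆ 𝔰` for every `H`-stable ideal `I`. -/
def IsHSemiprime (ξ : PartialModuleAlgebra k H A) (s : Submodule k A) : Prop :=
  IsIdeal k s ∧ Hstable k ξ s ∧ s ≠ ⊤ ∧
    ∀ I : Submodule k A, IsIdeal k I → Hstable k ξ I → idealProd k I I ≤ s → I ≤ s

/-- The subspace `A(H·x)A(H·y)`, spanned by the products `a (h·x) b (g·y)`. -/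
def spanAxAy (ξ : PartialModuleAlgebra k H A) (x y : A) : Submodule k A :=
  Submodule.span k {w | ∃ (a : A) (h : H) (b : A) (g : H), w = a * ξ.act h x * b * ξ.act g y}

/-- An `Hm`-system: a nonempty `M ⊆ A` such that `A(H·x)A(H·y) ∩ M ≠ ∅` for `x, y ∈ M`. -/
def HmSystem (ξ : PartialModuleAlgebra k H A) (M : Set A) : Prop :=
  M.Nonempty ∧ ∀ x ∈ M, ∀ y ∈ M, ∃ z ∈ M, z ∈ spanAxAy k ξ x y

/-- An `Hn`-system: a nonempty `N ⊆ A` such that `A(H·x)A(H·x) ∩ N ≠ ∅` for `x ∈ N`. -/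
def HnSystem (ξ : PartialModuleAlgebra k H A) (N : Set A) : Prop :=
  N.Nonempty ∧ ∀ x ∈ N, ∃ z ∈ N, z ∈ spanAxAy k ξ x x

/-- The `H`-radical `√_H(I)` of an `H`-stable ideal `I`:
`{x | every Hm-system containing x meets I}`. -/
def Hradical (ξ : PartialModuleAlgebra k H A) (I : Submodule k A) : Set A :=
  {x : A | ∀ M : Set A, HmSystem k ξ M → x ∈ M → (M ∩ (I : Set A)).Nonempty}

theorem sweedler_mem_aux (f g : H →ₗ[k] A) (I : Submodule k A)
    (hfg : ∀ x y, f x * g y ∈ I) (h : H) : sweedler k f g h ∈ I := by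
  have key : ∀ t : H ⊗[k] H, LinearMap.mul' k A (TensorProduct.map f g t) ∈ I := by
    intro t
    induction t using TensorProduct.induction_on with
    | zero => simp
    | tmul x y => simpa using hfg x y
    | add x y hx hy => rw [map_add, map_add]; exact I.add_mem hx hy
  exact key _

/-- The `H`-stable ideal generated by `a`. -/
def genIdeal (ξ : PartialModuleAlgebra k H A) (a : A) : Submodule k A :=
  Submodule.span k {w | ∃ (c : A) (h : H) (d : A), w = c * ξ.act h a * d}

theorem genIdeal_isIdeal (ξ : PartialModuleAlgebra k H A) (a : A) :
    IsIdeal k (genIdeal k ξ a) := by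
  intro x hx b
  induction hx using Submodule.span_induction with
  | mem x hx =>
    obtain ⟨c, h, d, rfl⟩ := hx
    exact ⟨Submodule.subset_span ⟨c, h, d * b, by simp only [mul_assoc]⟩,
      Submodule.subset_span ⟨b * c, h, d, by simp only [mul_assoc]⟩⟩
  | zero => simp
  | add x y _ _ hx hy =>
    rw [add_mul, mul_add]
    exact ⟨Submodule.add_mem _ hx.1 hy.1, Submodule.add_mem _ hx.2 hy.2⟩
  | smul r x _ hx =>
    rw [smul_mul_assoc, mul_smul_comm]
    exact ⟨Submodule.smul_mem _ _ hx.1, Submodule.smul_mem _ _ hx.2⟩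

theorem genIdeal_stable (ξ : PartialModuleAlgebra k H A) (a : A) :
    Hstable k ξ (genIdeal k ξ a) := by
  intro l x hx
  have hI := genIdeal_isIdeal k ξ a
  induction hx using Submodule.span_induction with
  | mem x hx =>
    obtain ⟨c, h, d, rfl⟩ := hx
    rw [ξ.act_mul]
    refine sweedler_mem_aux k _ _ _ (fun x y => (hI _ ?_ _).1) _
    rw [LinearMap.flip_apply, ξ.act_mul]
    refine sweedler_mem_aux k _ _ _ (fun x y => (hI _ ?_ _).2) _
    rw [LinearMap.flip_apply, ξ.act_act]
    refine sweedler_mem_aux k _ _ _ (fun x y => (hI _ ?_ _).2) _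
    exact Submodule.subset_span ⟨1, y * h, 1, by simp⟩
  | zero => simp
  | add x y _ _ hx hy => rw [map_add]; exact Submodule.add_mem _ hx hy
  | smul r x _ hx => rw [map_smul]; exact Submodule.smul_mem _ _ hx

theorem mem_genIdeal (ξ : PartialModuleAlgebra k H A) (a : A) : a ∈ genIdeal k ξ a :=
  Submodule.subset_span ⟨1, 1, 1, by simp [ξ.one_act]⟩

/-- Characterization of `H`-prime ideals: a proper `H`-stable ideal `𝔭` is `H`-prime iff
for all `a, b ∈ A`, `(H·a)A(H·b) ⊆ 𝔭` implies `a ∈ 𝔭` or `b ∈ 𝔭`. -/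
theorem isHPrime_iff_elementwise (ξ : PartialModuleAlgebra k H A) (p : Submodule k A)
    (hp : IsIdeal k p) (hs : Hstable k ξ p) (hne : p ≠ ⊤) :
    IsHPrime k ξ p ↔
      ∀ a b : A, (∀ (h g : H) (c : A), ξ.act h a * c * ξ.act g b ∈ p) →
        a ∈ p ∨ b ∈ p := by
  constructor
  · rintro ⟨-, -, -, hP⟩ a b hab
    have key : idealProd k (genIdeal k ξ a) (genIdeal k ξ b) ≤ p := by
      refine Submodule.span_le.2 ?_
      rintro _ ⟨x, hx, y, hy, rfl⟩
      change x * y ∈ p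
      induction hx using Submodule.span_induction with
      | mem x hx =>
        obtain ⟨c, h, d, rfl⟩ := hx
        induction hy using Submodule.span_induction with
        | mem y hy =>
          obtain ⟨c', g, d', rfl⟩ := hy
          have := (hp _ (hp _ (hab h g (d * c')) d').1 c).2
          simpa only [mul_assoc] using this
        | zero => simp
        | add x y _ _ hx hy => rw [mul_add]; exact Submodule.add_mem _ hx hy
        | smul r x _ hx => rw [mul_smul_comm]; exact Submodule.smul_mem _ _ hx
      | zero => simp
      | add x y _ _ hx hy => rw [add_mul]; exact Submodule.add_mem _ hx hy
      | smul r x _ hx => rw [smul_mul_assoc]; exact Submodule.smul_mem _ _ hx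
    exact (hP _ _ (genIdeal_isIdeal k ξ a) (genIdeal_stable k ξ a) (genIdeal_isIdeal k ξ b)
      (genIdeal_stable k ξ b) key).imp (fun h => h (mem_genIdeal k ξ a))
      (fun h => h (mem_genIdeal k ξ b))
  · intro hE
    refine ⟨hp, hs, hne, fun I J hI hIs hJ hJs hIJ => ?_⟩
    by_contra hcon
    rw [not_or] at hcon
    obtain ⟨a, ha, hap⟩ := SetLike.not_le_iff_exists.1 hcon.1
    obtain ⟨b, hb, hbp⟩ := SetLike.not_le_iff_exists.1 hcon.2
    rcases hE a b (fun h g c => hIJ (Submodule.subset_span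
      ⟨_, (hI _ (hIs h a ha) c).1, _, hJs g b hb, rfl⟩)) with h | h
    · exact hap h
    · exact hbp h
end
end

section
/- Let A be a partial H-module algebra. An H-stable ideal 𝔭 ⊊ A is H-prime if and only if A∖𝔭 is an Hm-system. -/
open TensorProduct

noncomputable section

variable (k : Type*) [Field k]

variable {H A : Type*} [Ring H] [HopfAlgebra k H] [Ring A] [Algebra k A]

theorem sweedler_mem (I : Submodule k A) (f g : H →ₗ[k] A)
    (hfg : ∀ u v, f u * g v ∈ I) (h : H) : sweedler k f g h ∈ I := by
  unfold sweedler
  simp only [LinearMap.comp_apply]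
  generalize (Coalgebra.comul (R := k) h) = t
  induction t using TensorProduct.induction_on with
  | zero => simp
  | tmul u v => simpa using hfg u v
  | add s t hs ht => simpa only [map_add] using I.add_mem hs ht

/-- The ideal `A(H·x)A`. -/
def genI (ξ : PartialModuleAlgebra k H A) (x : A) : Submodule k A :=
  Submodule.span k {w | ∃ (a : A) (h : H) (b : A), w = a * ξ.act h x * b}

theorem genI_ideal (ξ : PartialModuleAlgebra k H A) (x : A) : IsIdeal k (genI k ξ x) := by
  intro w hw c
  unfold genI at hw
  induction hw using Submodule.span_induction with
  | mem w hw =>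
    obtain ⟨a, h, b, rfl⟩ := hw
    exact ⟨Submodule.subset_span ⟨a, h, b * c, by simp only [mul_assoc]⟩,
      Submodule.subset_span ⟨c * a, h, b, by simp only [mul_assoc]⟩⟩
  | zero => simp
  | add u v _ _ hu hv =>
    rw [add_mul, mul_add]
    exact ⟨Submodule.add_mem _ hu.1 hv.1, Submodule.add_mem _ hu.2 hv.2⟩
  | smul r u _ hu =>
    rw [smul_mul_assoc, mul_smul_comm]
    exact ⟨Submodule.smul_mem _ _ hu.1, Submodule.smul_mem _ _ hu.2⟩

theorem act_mem_genI (ξ : PartialModuleAlgebra k H A) (x : A) (h : H) :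
    ξ.act h x ∈ genI k ξ x :=
  Submodule.subset_span ⟨1, h, 1, by simp⟩

theorem genI_stable (ξ : PartialModuleAlgebra k H A) (x : A) : Hstable k ξ (genI k ξ x) := by
  intro g w hw
  have hI := genI_ideal k ξ x
  unfold genI at hw
  induction hw using Submodule.span_induction with
  | mem w hw =>
    obtain ⟨a, h, b, rfl⟩ := hw
    rw [ξ.act_mul]
    refine sweedler_mem k _ _ _ (fun u v => (hI _ ?_ _).1) g
    rw [LinearMap.flip_apply, ξ.act_mul]
    refine sweedler_mem k _ _ _ (fun u v => (hI _ ?_ _).2) u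
    rw [LinearMap.flip_apply, ξ.act_act]
    refine sweedler_mem k _ _ _ (fun u v => (hI _ ?_ _).2) v
    exact act_mem_genI k ξ x _
  | zero => simp
  | add u v _ _ hu hv => rw [map_add]; exact Submodule.add_mem _ hu hv
  | smul r u _ hu => rw [map_smul]; exact Submodule.smul_mem _ _ hu

/-- A proper `H`-stable ideal `𝔭` is `H`-prime iff its complement is an `Hm`-system. -/
theorem isHPrime_iff_compl_HmSystem (ξ : PartialModuleAlgebra k H A) (p : Submodule k A)
    (hp : IsIdeal k p) (hs : Hstable k ξ p) (hne : p ≠ ⊤) :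
    IsHPrime k ξ p ↔ HmSystem k ξ ((p : Set A)ᶜ) := by
  constructor
  · rintro ⟨-, -, -, H1⟩
    constructor
    · by_contra hc
      rw [Set.not_nonempty_iff_eq_empty, Set.compl_empty_iff] at hc
      exact hne (SetLike.coe_injective (by simpa using hc))
    · intro x hx y hy
      by_contra! hc
      have hle : ∀ z ∈ spanAxAy k ξ x y, z ∈ p := fun z hz => by
        by_contra hzp
        exact hc z hzp hz
      have hm : ∀ z : A, ξ.act 1 z ∈ genI k ξ z := fun z => act_mem_genI k ξ z 1
      simp only [ξ.one_act] at hm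
      suffices hle2 : idealProd k (genI k ξ x) (genI k ξ y) ≤ p by
        rcases H1 _ _ (genI_ideal k ξ x) (genI_stable k ξ x) (genI_ideal k ξ y)
          (genI_stable k ξ y) hle2 with h | h
        · exact hx (h (hm x))
        · exact hy (h (hm y))
      · unfold idealProd
        rw [Submodule.span_le]
        rintro _ ⟨u, hu, v, hv, rfl⟩
        show u * v ∈ p
        unfold genI at hu hv
        induction hu using Submodule.span_induction with
        | mem u hu =>
          obtain ⟨a, h, b, rfl⟩ := hu
          induction hv using Submodule.span_induction with
          | mem v hv =>
            obtain ⟨c, g, d, rfl⟩ := hv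
            have := (hp _ (hle _ (Submodule.subset_span ⟨a, h, b * c, g, rfl⟩)) d).1
            simpa only [mul_assoc] using this
          | zero => simp
          | add u v _ _ hu hv => rw [mul_add]; exact p.add_mem hu hv
          | smul r u _ hu => rw [mul_smul_comm]; exact p.smul_mem _ hu
        | zero => simp
        | add u v _ _ hu hv => rw [add_mul]; exact p.add_mem hu hv
        | smul r u _ hu => rw [smul_mul_assoc]; exact p.smul_mem _ hu
  · rintro ⟨-, hM⟩
    refine ⟨hp, hs, hne, fun I J hI hIs hJ hJs hIJ => ?_⟩
    by_contra! hc
    obtain ⟨x, hxI, hx⟩ := SetLike.not_le_iff_exists.mp hc.1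
    obtain ⟨y, hyJ, hy⟩ := SetLike.not_le_iff_exists.mp hc.2
    obtain ⟨z, hz, hzs⟩ := hM x hx y hy
    refine hz (hIJ ((Submodule.span_le.mpr ?_ : spanAxAy k ξ x y ≤ idealProd k I J) hzs))
    rintro _ ⟨a, h, b, g, rfl⟩
    exact Submodule.subset_span
      ⟨_, (hI _ (hI _ (hIs h x hxI) a).2 b).1, _, hJs g y hyJ, rfl⟩
end
end

section
/- Let A be a partial H-module algebra, M ⊆ A an Hm-system, and 𝔭 an H-stable ideal of A maximal with respect to the property 𝔭 ∩ M = ∅. Then 𝔭 is H-prime. -/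
open TensorProduct

noncomputable section

variable (k : Type*) [Field k]

variable {H A : Type*} [Ring H] [HopfAlgebra k H] [Ring A] [Algebra k A]

/-- If `M` is an `Hm`-system and `𝔭` is an `H`-stable ideal maximal with respect to
`𝔭 ∩ M = ∅`, then `𝔭` is `H`-prime. -/
theorem maximal_disjoint_isHPrime (ξ : PartialModuleAlgebra k H A) (M : Set A)
    (hM : HmSystem k ξ M) (p : Submodule k A) (hp : IsIdeal k p) (hs : Hstable k ξ p)
    (hdisj : (p : Set A) ∩ M = ∅)
    (hmax : ∀ q : Submodule k A, IsIdeal k q → Hstable k ξ q → p ≤ q →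
      (q : Set A) ∩ M = ∅ → q = p) :
    IsHPrime k ξ p := by
  have hsupI : ∀ I : Submodule k A, IsIdeal k I → IsIdeal k (p ⊔ I) := by
    intro I hI a ha b
    obtain ⟨u, hu, v, hv, rfl⟩ := Submodule.mem_sup.1 ha
    rw [add_mul, mul_add]
    exact ⟨Submodule.add_mem_sup (hp u hu b).1 (hI v hv b).1,
      Submodule.add_mem_sup (hp u hu b).2 (hI v hv b).2⟩
  have hsupS : ∀ I : Submodule k A, Hstable k ξ I → Hstable k ξ (p ⊔ I) := by
    intro I hI h x hx
    obtain ⟨u, hu, v, hv, rfl⟩ := Submodule.mem_sup.1 hx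
    rw [map_add]
    exact Submodule.add_mem_sup (hs h u hu) (hI h v hv)
  have key : ∀ I : Submodule k A, IsIdeal k I → Hstable k ξ I → ¬ I ≤ p →
      ∃ x ∈ M, x ∈ p ⊔ I := by
    intro I hI hIs hn
    by_contra hc
    apply hn
    have := hmax (p ⊔ I) (hsupI I hI) (hsupS I hIs) le_sup_left (by
      ext x
      constructor
      · rintro ⟨h1, h2⟩
        exact hc ⟨x, h2, h1⟩
      · intro h
        exact h.elim)
    rw [← this]
    exact le_sup_right
  have hno : ∀ z ∈ M, z ∉ p := by
    intro z hz hzp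
    have : z ∈ (p : Set A) ∩ M := ⟨hzp, hz⟩
    rw [hdisj] at this
    exact this
  refine ⟨hp, hs, ?_, ?_⟩
  · rintro rfl
    obtain ⟨z, hz⟩ := hM.1
    exact hno z hz Submodule.mem_top
  · intro I J hI hIs hJ hJs hIJ
    by_contra hc
    rw [not_or] at hc
    obtain ⟨x, hxM, hx⟩ := key I hI hIs hc.1
    obtain ⟨y, hyM, hy⟩ := key J hJ hJs hc.2
    obtain ⟨z, hzM, hz⟩ := hM.2 x hxM y hyM
    apply hno z hzM
    refine (Submodule.span_le.2 ?_ : spanAxAy k ξ x y ≤ p) hz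
    rintro w ⟨a, h, b, g, rfl⟩
    have h1 : a * ξ.act h x * b ∈ p ⊔ I :=
      (hsupI I hI _ (hsupI I hI _ (hsupS I hIs h x hx) a).2 b).1
    have h2 : ξ.act g y ∈ p ⊔ J := hsupS J hJs g y hy
    obtain ⟨u, hu, v, hv, e1⟩ := Submodule.mem_sup.1 h1
    obtain ⟨s, hs', t, ht, e2⟩ := Submodule.mem_sup.1 h2
    rw [← e1, ← e2, add_mul, mul_add v]
    exact p.add_mem (hp u hu _).1 (p.add_mem (hp s hs' v).2
      (hIJ (Submodule.subset_span ⟨v, hv, t, ht, rfl⟩)))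
end
end

section
/- Let A be a partial H-module algebra and 𝔰 ⊊ A an H-stable ideal. The following are equivalent: (1) 𝔰 is H-semiprime (I² ⊆ 𝔰 ⇒ I ⊆ 𝔰 for H-stable ideals I); (2) 𝔰 is an intersection of H-prime ideals; (3) 𝔰 = √_H(𝔰). -/
open TensorProduct

noncomputable section

variable (k : Type*) [Field k]

variable {H A : Type*} [Ring H] [HopfAlgebra k H] [Ring A] [Algebra k A]

theorem aux_mul_mono {I J K L : Submodule k A} (h1 : I ≤ J) (h2 : K ≤ L) : I * K ≤ J * L :=
  Submodule.mul_le.2 fun _ ha _ hb => Submodule.mul_mem_mul (h1 ha) (h2 hb)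

theorem aux_mono_l {I J K : Submodule k A} (h1 : I ≤ J) : I * K ≤ J * K :=
  aux_mul_mono k h1 le_rfl

theorem aux_mono_r {I J K : Submodule k A} (h1 : I ≤ J) : K * I ≤ K * J :=
  aux_mul_mono k le_rfl h1

theorem aux_sweedler_mem (I : Submodule k A) (f g : H →ₗ[k] A)
    (hI : ∀ u v, f u * g v ∈ I) (h : H) : sweedler k f g h ∈ I := by
  simp only [sweedler, LinearMap.comp_apply]
  generalize (Coalgebra.comul h : H ⊗[k] H) = t
  induction t using TensorProduct.induction_on with
  | zero => simp
  | tmul u v => simpa using hI u v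
  | add a b ha hb => rw [map_add, map_add]; exact I.add_mem ha hb

theorem aux_idealProd (I J : Submodule k A) : idealProd k I J = I * J := by
  apply le_antisymm
  · refine Submodule.span_le.2 ?_
    rintro z ⟨a, ha, b, hb, rfl⟩
    exact Submodule.mul_mem_mul ha hb
  · refine Submodule.mul_le.2 fun a ha b hb => Submodule.subset_span ⟨a, ha, b, hb, rfl⟩

/-- The left ideal `A(H·x)`. -/
def auxL (ξ : PartialModuleAlgebra k H A) (x : A) : Submodule k A :=
  ⊤ * LinearMap.range (ξ.act.flip x)

theorem aux_span (ξ : PartialModuleAlgebra k H A) (x y : A) :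
    spanAxAy k ξ x y = auxL k ξ x * auxL k ξ y := by
  apply le_antisymm
  · refine Submodule.span_le.2 ?_
    rintro z ⟨a, h, b, g, rfl⟩
    rw [mul_assoc]
    exact Submodule.mul_mem_mul (Submodule.mul_mem_mul trivial ⟨h, rfl⟩)
      (Submodule.mul_mem_mul trivial ⟨g, rfl⟩)
  · unfold auxL
    rw [← mul_assoc]
    refine Submodule.mul_le.2 ?_
    rintro u hu _ ⟨g, rfl⟩
    revert u
    change _ ≤ Submodule.comap (LinearMap.mulRight k (ξ.act.flip y g)) (spanAxAy k ξ x y)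
    refine Submodule.mul_le.2 ?_
    rintro u hu b -
    revert u
    change _ ≤ Submodule.comap (LinearMap.mulRight k b)
      (Submodule.comap (LinearMap.mulRight k (ξ.act.flip y g)) (spanAxAy k ξ x y))
    refine Submodule.mul_le.2 ?_
    rintro a - _ ⟨h, rfl⟩
    exact Submodule.subset_span ⟨a, h, b, g, rfl⟩

theorem aux_mul_stable (ξ : PartialModuleAlgebra k H A) (I J : Submodule k A)
    (hI : Hstable k ξ I) (hJ : Hstable k ξ J) : Hstable k ξ (I * J) := by
  intro h
  change _ ≤ Submodule.comap (ξ.act h) (I * J)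
  refine Submodule.mul_le.2 fun a ha b hb => ?_
  rw [Submodule.mem_comap, ξ.act_mul]
  exact aux_sweedler_mem k _ _ _ (fun u v => Submodule.mul_mem_mul (hI u a ha) (hJ v b hb)) h

theorem aux_L_left (ξ : PartialModuleAlgebra k H A) (x : A) : ⊤ * auxL k ξ x ≤ auxL k ξ x := by
  unfold auxL
  rw [← mul_assoc]
  exact aux_mono_l k le_top

theorem aux_L_stable (ξ : PartialModuleAlgebra k H A) (x : A) : Hstable k ξ (auxL k ξ x) := by
  intro h
  change _ ≤ Submodule.comap (ξ.act h) (auxL k ξ x)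
  refine Submodule.mul_le.2 ?_
  rintro a - _ ⟨g, rfl⟩
  rw [Submodule.mem_comap, ξ.act_mul]
  refine aux_sweedler_mem k _ _ _ (fun u v => ?_) h
  refine aux_L_left k ξ x (Submodule.mul_mem_mul trivial ?_)
  change ξ.act v (ξ.act g x) ∈ _
  rw [ξ.act_act]
  exact aux_sweedler_mem k _ _ _
    (fun u v => Submodule.mul_mem_mul (M := ⊤) (N := LinearMap.range (ξ.act.flip x))
      Submodule.mem_top ⟨v * g, rfl⟩) v

theorem aux_L_self (ξ : PartialModuleAlgebra k H A) (x : A) : x ∈ auxL k ξ x := by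
  have : (1 : A) * ξ.act 1 x ∈ auxL k ξ x := Submodule.mul_mem_mul trivial ⟨1, rfl⟩
  rwa [one_mul, ξ.one_act] at this

/-- `L x` is least among `H`-stable left ideals containing `x`. -/
theorem aux_L_le (ξ : PartialModuleAlgebra k H A) (x : A) (I : Submodule k A)
    (h1 : ⊤ * I ≤ I) (h2 : Hstable k ξ I) (hx : x ∈ I) : auxL k ξ x ≤ I := by
  refine Submodule.mul_le.2 ?_
  rintro a - _ ⟨g, rfl⟩
  exact h1 (Submodule.mul_mem_mul trivial (h2 g x hx))

theorem aux_ideal (I : Submodule k A) : IsIdeal k I ↔ I * ⊤ ≤ I ∧ ⊤ * I ≤ I := by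
  constructor
  · intro h
    exact ⟨Submodule.mul_le.2 fun a ha b _ => (h a ha b).1,
      Submodule.mul_le.2 fun b _ a ha => (h a ha b).2⟩
  · rintro ⟨h1, h2⟩ a ha b
    exact ⟨h1 (Submodule.mul_mem_mul ha trivial), h2 (Submodule.mul_mem_mul trivial ha)⟩

theorem aux_G_ideal (ξ : PartialModuleAlgebra k H A) (x : A) : IsIdeal k (auxL k ξ x * ⊤) := by
  rw [aux_ideal]
  constructor
  · rw [mul_assoc]
    exact aux_mono_r k le_top
  · rw [← mul_assoc]
    exact aux_mono_l k (aux_L_left k ξ x)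

theorem aux_G_stable (ξ : PartialModuleAlgebra k H A) (x : A) :
    Hstable k ξ (auxL k ξ x * ⊤) :=
  aux_mul_stable k ξ _ _ (aux_L_stable k ξ x) (fun _ _ _ => trivial)

theorem aux_G_self (ξ : PartialModuleAlgebra k H A) (x : A) : x ∈ auxL k ξ x * (⊤ : Submodule k A) := by
  have := Submodule.mul_mem_mul (aux_L_self k ξ x) (Submodule.mem_top : (1 : A) ∈ (⊤ : Submodule k A))
  rwa [mul_one] at this

theorem aux_G_mul (ξ : PartialModuleAlgebra k H A) (x y : A) (p : Submodule k A)
    (hp : IsIdeal k p) (h : spanAxAy k ξ x y ≤ p) :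
    idealProd k (auxL k ξ x * ⊤) (auxL k ξ y * ⊤) ≤ p := by
  rw [aux_idealProd, mul_assoc, ← mul_assoc ⊤, ← mul_assoc]
  rw [aux_span] at h
  calc auxL k ξ x * (⊤ * auxL k ξ y) * ⊤ ≤ p * ⊤ :=
        aux_mono_l k
          ((aux_mono_r k (aux_L_left k ξ y)).trans h)
    _ ≤ p := ((aux_ideal k p).1 hp).1

theorem aux_exists_system (ξ : PartialModuleAlgebra k H A) (s : Submodule k A)
    (hs : IsHSemiprime k ξ s) (x : A) (hx : x ∉ s) :
    ∃ M : Set A, HmSystem k ξ M ∧ x ∈ M ∧ ∀ z ∈ M, z ∉ s := by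
  obtain ⟨h1, h2, h3, h4⟩ := hs
  have step : ∀ y : {y : A // y ∉ s}, ∃ z : {y : A // y ∉ s}, z.1 ∈ spanAxAy k ξ y.1 y.1 := by
    rintro ⟨y, hy⟩
    by_contra! hc
    apply hy
    refine h4 _ (aux_G_ideal k ξ y) (aux_G_stable k ξ y)
      (aux_G_mul k ξ y y s h1 fun z hz => ?_) (aux_G_self k ξ y)
    by_contra hzs
    exact hc ⟨z, hzs⟩ hz
  choose f hf using step
  let q : ℕ → {y : A // y ∉ s} := fun n => f^[n] ⟨x, hx⟩
  have hq : ∀ n, (q (n + 1)).1 ∈ auxL k ξ (q n).1 * auxL k ξ (q n).1 := by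
    intro n
    rw [← aux_span]
    simp only [q, Function.iterate_succ_apply']
    exact hf _
  have hanti : Antitone fun n => auxL k ξ (q n).1 := by
    refine antitone_nat_of_succ_le fun n => ?_
    refine aux_L_le k ξ _ _ (aux_L_left k ξ _) (aux_L_stable k ξ _) ?_
    exact aux_L_left k ξ _ (aux_mono_l k le_top (hq n))
  refine ⟨Set.range fun n => (q n).1, ⟨⟨_, 0, rfl⟩, ?_⟩, ⟨0, rfl⟩, ?_⟩
  · rintro _ ⟨i, rfl⟩ _ ⟨j, rfl⟩
    refine ⟨_, ⟨max i j + 1, rfl⟩, ?_⟩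
    rw [aux_span]
    exact aux_mul_mono k (hanti (le_max_left i j)) (hanti (le_max_right i j)) (hq _)
  · rintro _ ⟨i, rfl⟩
    exact (q i).2

theorem aux_exists_prime (ξ : PartialModuleAlgebra k H A) (s : Submodule k A)
    (hp : IsIdeal k s) (hs : Hstable k ξ s) (M : Set A) (hM : HmSystem k ξ M)
    (hd : ∀ z ∈ M, z ∉ s) :
    ∃ p, IsHPrime k ξ p ∧ s ≤ p ∧ ∀ z ∈ M, z ∉ p := by
  obtain ⟨p, hsp, hmax⟩ := zorn_le_nonempty₀
    {p : Submodule k A | IsIdeal k p ∧ Hstable k ξ p ∧ ∀ z ∈ M, z ∉ p} (by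
      intro c hc hchain y hy
      have hmem : ∀ z, z ∈ sSup c ↔ ∃ p ∈ c, z ∈ p := fun z =>
        Submodule.mem_sSup_of_directed ⟨y, hy⟩ hchain.directedOn
      refine ⟨sSup c, ⟨?_, ?_, ?_⟩, fun z hz => le_sSup hz⟩
      · intro a ha b
        obtain ⟨p, hpc, hap⟩ := (hmem a).1 ha
        exact ⟨le_sSup hpc ((hc hpc).1 a hap b).1, le_sSup hpc ((hc hpc).1 a hap b).2⟩
      · intro h a ha
        obtain ⟨p, hpc, hap⟩ := (hmem a).1 ha
        exact le_sSup hpc ((hc hpc).2.1 h a hap)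
      · intro z hz hz'
        obtain ⟨p, hpc, hap⟩ := (hmem z).1 hz'
        exact (hc hpc).2.2 z hz hap) s ⟨hp, hs, hd⟩
  obtain ⟨pi, pst, pd⟩ := hmax.prop
  have pi' := (aux_ideal k p).1 pi
  have key : ∀ I : Submodule k A, IsIdeal k I → Hstable k ξ I → ¬ I ≤ p →
      ∃ m ∈ M, auxL k ξ m ≤ p ⊔ I := by
    intro I hI hIs hIp
    have hI' := (aux_ideal k I).1 hI
    have e1 : p ⊔ I ≤ p ⊔ I := le_rfl
    have hl : ⊤ * (p ⊔ I) ≤ p ⊔ I := by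
      rw [Submodule.mul_sup]; exact sup_le_sup pi'.2 hI'.2
    have hr : (p ⊔ I) * ⊤ ≤ p ⊔ I := by
      rw [Submodule.sup_mul]; exact sup_le_sup pi'.1 hI'.1
    have hst : Hstable k ξ (p ⊔ I) := by
      intro h
      change p ⊔ I ≤ Submodule.comap (ξ.act h) (p ⊔ I)
      exact sup_le (fun x hx => Submodule.mem_sup_left (pst h x hx))
        (fun x hx => Submodule.mem_sup_right (hIs h x hx))
    by_contra! hc
    apply hIp
    refine le_trans le_sup_right (hmax.le_of_ge (y := p ⊔ I)
      ⟨(aux_ideal k _).2 ⟨hr, hl⟩, hst, fun z hz hz' => ?_⟩ le_sup_left)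
    exact hc z hz (aux_L_le k ξ z _ hl hst hz')
  refine ⟨p, ⟨pi, pst, ?_, ?_⟩, hsp, pd⟩
  · rintro rfl
    obtain ⟨m, hm⟩ := hM.1
    exact pd m hm trivial
  · intro I J hI hIs hJ hJs hIJ
    by_contra! hc
    obtain ⟨m, hm, hmI⟩ := key I hI hIs hc.1
    obtain ⟨n, hn, hnJ⟩ := key J hJ hJs hc.2
    obtain ⟨z, hz, hz'⟩ := hM.2 m hm n hn
    refine pd z hz ?_
    rw [aux_span] at hz'
    rw [aux_idealProd] at hIJ
    have h1 : (p ⊔ I) * (p ⊔ J) ≤ p := by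
      rw [Submodule.sup_mul, Submodule.mul_sup I]
      exact sup_le ((aux_mono_r k le_top).trans pi'.1)
        (sup_le ((aux_mono_l k le_top).trans pi'.2) hIJ)
    exact h1 (aux_mul_mono k hmI hnJ hz')

/-- For a proper `H`-stable ideal `𝔰`, the following are equivalent: `𝔰` is `H`-semiprime;
`𝔰` is an intersection of `H`-prime ideals; `𝔰 = √_H(𝔰)`. -/
theorem isHSemiprime_tfae (ξ : PartialModuleAlgebra k H A) (s : Submodule k A)
    (hp : IsIdeal k s) (hs : Hstable k ξ s) (hne : s ≠ ⊤) :
    (IsHSemiprime k ξ s ↔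
      ∃ P : Set (Submodule k A), (∀ p ∈ P, IsHPrime k ξ p) ∧ (s : Set A) = ⋂ p ∈ P, (p : Set A)) ∧
    (IsHSemiprime k ξ s ↔ (s : Set A) = Hradical k ξ s) := by
  refine ⟨⟨fun h => ?_, ?_⟩, ⟨fun h => ?_, fun h => ⟨hp, hs, hne, ?_⟩⟩⟩
  · refine ⟨{p | IsHPrime k ξ p ∧ s ≤ p}, fun p hp => hp.1, ?_⟩
    ext x
    simp only [Set.mem_iInter, SetLike.mem_coe]
    refine ⟨fun hx p hp => hp.2 hx, fun hx => ?_⟩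
    by_contra hxs
    obtain ⟨M, hM, hxM, hd⟩ := aux_exists_system k ξ s h x hxs
    obtain ⟨p, hpp, hsp, hpd⟩ := aux_exists_prime k ξ s hp hs M hM hd
    exact hpd x hxM (hx p ⟨hpp, hsp⟩)
  · rintro ⟨P, hP, hsP⟩
    have hmem : ∀ x, x ∈ s ↔ ∀ p ∈ P, x ∈ p := fun x => by
      rw [← SetLike.mem_coe, hsP]; simp
    refine ⟨hp, hs, hne, fun I hI hIs hII x hx => (hmem x).2 fun p hpP => ?_⟩
    have := (hP p hpP).2.2.2 I I hI hIs hI hIs (fun z hz => (hmem z).1 (hII hz) p hpP)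
    exact (or_self_iff.1 this) hx
  · ext x
    refine ⟨fun hx M _ hxM => ⟨x, hxM, hx⟩, fun hx => ?_⟩
    by_contra hxs
    obtain ⟨M, hM, hxM, hd⟩ := aux_exists_system k ξ s h x hxs
    obtain ⟨z, hz, hz'⟩ := hx M hM hxM
    exact hd z hz hz'
  · intro I hI hIs hII x hx
    rw [← SetLike.mem_coe, h]
    intro M hM hxM
    by_contra hc
    obtain ⟨p, hpp, hsp, hpd⟩ := aux_exists_prime k ξ s hp hs M hM
      (fun z hz hz' => hc ⟨z, hz, hz'⟩)
    exact hpd x hxM ((or_self_iff.1 (hpp.2.2.2 I I hI hIs hI hIs (hII.trans hsp))) hx)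
end
end

section
/- Let A be a partial H-module algebra. A vector space M is a right partial (A,H)-module (i.e., a right A-module with a map M⊗H → M satisfying m◂1_H = m and ((m◂h)a)◂g = Σ(m(h₁·a))◂(h₂g)) if and only if M is a right module over the partial smash product A#H, via m(a#h) = (ma)◂h; moreover ann_A(M) = ann_{A#H}(M) ∩ A. -/
open TensorProduct

noncomputable section

variable (k : Type*) [Field k]

variable {H A : Type*} [Ring H] [HopfAlgebra k H] [Ring A] [Algebra k A]

variable {M : Type*} [AddCommGroup M] [Module k M]

/-- A right partial `(A,H)`-module structure on `M` (actions written on the left):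
`ra a m = m·a`, `rh h m = m ◂ h`, satisfying the right `A`-module axioms, `m ◂ 1_H = m`,
and `((m ◂ h)a) ◂ g = Σ (m (h₁·a)) ◂ (h₂ g)`. -/
def IsRightPartialModule (ξ : PartialModuleAlgebra k H A)
    (ra : A →ₗ[k] M →ₗ[k] M) (rh : H →ₗ[k] M →ₗ[k] M) : Prop :=
  (∀ m : M, ra 1 m = m) ∧
  (∀ (a b : A) (m : M), ra (a * b) m = ra b (ra a m)) ∧
  (∀ m : M, rh 1 m = m) ∧
  (∀ (h g : H) (a : A) (m : M),
    rh g (ra a (rh h m)) =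
      TensorProduct.lift
        (((rh ∘ₗ LinearMap.mulRight k g).flip) ∘ₗ ((ra.flip m) ∘ₗ ξ.act.flip a))
        (Coalgebra.comul h))

/-- A right module structure on `M` over the partial smash product `A # H`
(the corner `S = (A ⊗ H)(1_A # 1_H)` with multiplication `μ`). -/
def IsSmashModule (μ : (A ⊗[k] H) →ₗ[k] (A ⊗[k] H) →ₗ[k] (A ⊗[k] H))
    (sm : (A ⊗[k] H) →ₗ[k] M →ₗ[k] M) : Prop :=
  (∀ m : M, sm (smashE k H A) m = m) ∧
  (∀ x ∈ smashS k μ, ∀ y ∈ smashS k μ, ∀ m : M, sm (μ x y) m = sm y (sm x m))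

theorem aux_assoc (ξ : PartialModuleAlgebra k H A) (f g j : H →ₗ[k] A) (h : H) :
    sweedler k f (sweedler k g j) h = sweedler k (sweedler k f g) j h := by
  have key := congrArg ((LinearMap.mul' k A) ∘ₗ (TensorProduct.map f
    ((LinearMap.mul' k A) ∘ₗ (TensorProduct.map g j)))) (Coalgebra.coassoc_apply (R := k) h)
  have e1 : ((LinearMap.mul' k A) ∘ₗ (TensorProduct.map f
      ((LinearMap.mul' k A) ∘ₗ (TensorProduct.map g j)))) ∘ₗ
      (LinearMap.lTensor H (Coalgebra.comul (R := k) (A := H))) =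
      (LinearMap.mul' k A) ∘ₗ (TensorProduct.map f (sweedler k g j)) := by
    ext x y
    simp [sweedler]
  have e0 : ((LinearMap.mul' k A) ∘ₗ (TensorProduct.map f
      ((LinearMap.mul' k A) ∘ₗ (TensorProduct.map g j)))) ∘ₗ
      (TensorProduct.assoc k H H H).toLinearMap =
      (LinearMap.mul' k A) ∘ₗ (TensorProduct.map
      ((LinearMap.mul' k A) ∘ₗ (TensorProduct.map f g)) j) := by
    ext x y z
    simp [mul_assoc]
  have e2 : ((LinearMap.mul' k A) ∘ₗ (TensorProduct.map
      ((LinearMap.mul' k A) ∘ₗ (TensorProduct.map f g)) j)) ∘ₗ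
      (LinearMap.rTensor H (Coalgebra.comul (R := k) (A := H))) =
      (LinearMap.mul' k A) ∘ₗ (TensorProduct.map (sweedler k f g) j) := by
    ext x y
    simp [sweedler]
  have e1' := LinearMap.congr_fun e1 (Coalgebra.comul (R := k) h)
  have e2' := LinearMap.congr_fun e2 (Coalgebra.comul (R := k) h)
  rw [← e0] at e2'
  exact (e1'.symm.trans key.symm).trans e2'

theorem aux_act_mul_act (ξ : PartialModuleAlgebra k H A) (h g : H) (b c : A) :
    ξ.act h (b * ξ.act g c) =
      sweedler k (ξ.act.flip b) (ξ.act.flip c ∘ₗ LinearMap.mulRight k g) h := by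
  rw [ξ.act_mul]
  have e : ξ.act.flip (ξ.act g c) =
      sweedler k (ξ.act.flip 1) ((ξ.act.flip c) ∘ₗ LinearMap.mulRight k g) := by
    ext x; exact ξ.act_act x g c
  rw [e, aux_assoc k ξ]
  have e' : sweedler k (ξ.act.flip b) (ξ.act.flip 1) = ξ.act.flip b := by
    ext x
    rw [← ξ.act_mul, mul_one]; rfl
  rw [e']

/-- auxiliary trilinear map -/
def auxPhi (f g : H →ₗ[k] A) (j : H →ₗ[k] H) : H ⊗[k] (H ⊗[k] H) →ₗ[k] A ⊗[k] H :=
  (LinearMap.rTensor H (LinearMap.mul' k A)) ∘ₗ (TensorProduct.assoc k A A H).symm.toLinearMap ∘ₗ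
    TensorProduct.map f (TensorProduct.map g j)

theorem auxPhi_left (ξ : PartialModuleAlgebra k H A)
    (μ : (A ⊗[k] H) →ₗ[k] (A ⊗[k] H) →ₗ[k] (A ⊗[k] H)) (hμ : SmashMulFormula k ξ μ)
    (a b c : A) (h g l : H) {ι : Type*} (r : Coalgebra.Repr k g ι) :
    μ (μ (a ⊗ₜ[k] h) (b ⊗ₜ[k] g)) (c ⊗ₜ[k] l) =
    ∑ i ∈ r.index, auxPhi k ((LinearMap.mulLeft k a) ∘ₗ ξ.act.flip b)
      (ξ.act.flip c ∘ₗ LinearMap.mulRight k (r.left i)) (LinearMap.mulRight k (r.right i * l))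
      (LinearMap.lTensor H (Coalgebra.comul (R := k) (A := H)) (Coalgebra.comul (R := k) h)) := by
  rw [hμ]
  induction Coalgebra.comul (R := k) h using TensorProduct.induction_on with
  | zero => simp
  | add x y hx hy => simp only [map_add, LinearMap.add_apply, hx, hy, Finset.sum_add_distrib]
  | tmul x y =>
    rw [TensorProduct.map_tmul, hμ, LinearMap.lTensor_tmul, LinearMap.mulRight_apply,
      Bialgebra.comul_mul, ← r.eq, Finset.mul_sum, map_sum]
    refine Finset.sum_congr rfl fun i _ => ?_
    induction Coalgebra.comul (R := k) y using TensorProduct.induction_on with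
    | zero => simp
    | add u v hu hv => simp only [map_add, add_mul, TensorProduct.tmul_add, hu, hv]
    | tmul u v => simp [auxPhi, mul_assoc]

theorem auxPhi_right (ξ : PartialModuleAlgebra k H A)
    (μ : (A ⊗[k] H) →ₗ[k] (A ⊗[k] H) →ₗ[k] (A ⊗[k] H)) (hμ : SmashMulFormula k ξ μ)
    (a b c : A) (h g l : H) {ι : Type*} (r : Coalgebra.Repr k g ι) :
    μ (a ⊗ₜ[k] h) (μ (b ⊗ₜ[k] g) (c ⊗ₜ[k] l)) =
    ∑ i ∈ r.index, auxPhi k ((LinearMap.mulLeft k a) ∘ₗ ξ.act.flip b)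
      (ξ.act.flip c ∘ₗ LinearMap.mulRight k (r.left i)) (LinearMap.mulRight k (r.right i * l))
      (TensorProduct.assoc k H H H
      (LinearMap.rTensor H (Coalgebra.comul (R := k) (A := H)) (Coalgebra.comul (R := k) h))) := by
  rw [hμ, ← r.eq, map_sum, map_sum]
  refine Finset.sum_congr rfl fun i _ => ?_
  rw [TensorProduct.map_tmul, hμ]
  induction Coalgebra.comul (R := k) h using TensorProduct.induction_on with
  | zero => simp
  | add x y hx hy => simp only [map_add, hx, hy]
  | tmul x y =>
    have e := aux_act_mul_act k ξ x (r.left i) b c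
    simp only [TensorProduct.map_tmul, LinearMap.comp_apply, LinearMap.flip_apply,
      LinearMap.mulLeft_apply, LinearMap.mulRight_apply, LinearMap.rTensor_tmul]
    rw [e, sweedler, LinearMap.comp_apply, LinearMap.comp_apply]
    induction Coalgebra.comul (R := k) x using TensorProduct.induction_on with
    | zero => simp
    | add u v hu hv => simp only [map_add, mul_add, TensorProduct.add_tmul, hu, hv]
    | tmul u v => simp [auxPhi, mul_assoc]

theorem aux_mu_assoc (ξ : PartialModuleAlgebra k H A)
    (μ : (A ⊗[k] H) →ₗ[k] (A ⊗[k] H) →ₗ[k] (A ⊗[k] H)) (hμ : SmashMulFormula k ξ μ)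
    (x y z : A ⊗[k] H) : μ (μ x y) z = μ x (μ y z) := by
  induction x using TensorProduct.induction_on with
  | zero => simp
  | add x x' hx hx' => simp only [map_add, LinearMap.add_apply, hx, hx']
  | tmul a h =>
  induction y using TensorProduct.induction_on with
  | zero => simp
  | add x x' hx hx' => simp only [map_add, LinearMap.add_apply, hx, hx']
  | tmul b g =>
  induction z using TensorProduct.induction_on with
  | zero => simp
  | add x x' hx hx' => simp only [map_add, hx, hx']
  | tmul c l =>
    rw [auxPhi_left k ξ μ hμ a b c h g l (Coalgebra.Repr.arbitrary k g),
      auxPhi_right k ξ μ hμ a b c h g l (Coalgebra.Repr.arbitrary k g), Coalgebra.coassoc_apply]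

theorem aux_mu_one (ξ : PartialModuleAlgebra k H A)
    (μ : (A ⊗[k] H) →ₗ[k] (A ⊗[k] H) →ₗ[k] (A ⊗[k] H)) (hμ : SmashMulFormula k ξ μ)
    (a b : A) (g : H) : μ (a ⊗ₜ[k] 1) (b ⊗ₜ[k] g) = (a * b) ⊗ₜ[k] g := by
  rw [hμ, Bialgebra.comul_one, Algebra.TensorProduct.one_def]
  simp [ξ.one_act]

/-- `M` is a right partial `(A,H)`-module iff `M` is a right `A # H`-module, via
`m (a # h) = (m a) ◂ h`; moreover `ann_A(M) = ann_{A#H}(M) ∩ A`. -/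
theorem rightPartialModule_iff_smashModule (ξ : PartialModuleAlgebra k H A)
    (μ : (A ⊗[k] H) →ₗ[k] (A ⊗[k] H) →ₗ[k] (A ⊗[k] H)) (hμ : SmashMulFormula k ξ μ) :
    -- from a partial `(A,H)`-module to an `A # H`-module
    (∀ (ra : A →ₗ[k] M →ₗ[k] M) (rh : H →ₗ[k] M →ₗ[k] M),
      IsRightPartialModule k ξ ra rh →
        ∃ sm : (A ⊗[k] H) →ₗ[k] M →ₗ[k] M, IsSmashModule k μ sm ∧
          (∀ (a : A) (h : H) (m : M), sm (μ (a ⊗ₜ[k] h) (smashE k H A)) m = rh h (ra a m)) ∧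
          -- `ann_A(M) = ann_{A#H}(M) ∩ A`
          (∀ a : A, (∀ m : M, ra a m = 0) ↔ (∀ m : M, sm (smashF k μ a) m = 0))) ∧
    -- from an `A # H`-module to a partial `(A,H)`-module
    (∀ sm : (A ⊗[k] H) →ₗ[k] M →ₗ[k] M, IsSmashModule k μ sm →
      IsRightPartialModule k ξ (sm ∘ₗ smashF k μ)
        (sm ∘ₗ ((μ.flip (smashE k H A)) ∘ₗ (TensorProduct.mk k A H (1 : A))))) := by
  constructor
  · rintro ra rh ⟨h1, h2, h3, h4⟩
    let sm : (A ⊗[k] H) →ₗ[k] M →ₗ[k] M :=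
      TensorProduct.lift ((LinearMap.llcomp k M M M).flip ∘ₗ ra |>.compr₂ LinearMap.id
        |>.compl₂ rh)
    have hsm : ∀ (a : A) (h : H) (m : M), sm (a ⊗ₜ[k] h) m = rh h (ra a m) := by
      intro a h m; simp [sm]
    have hmul : ∀ x y m, sm (μ x y) m = sm y (sm x m) := by
      intro x y m
      induction x using TensorProduct.induction_on with
      | zero => simp
      | add x x' hx hx' => simp only [map_add, LinearMap.add_apply, hx, hx']
      | tmul a h =>
      induction y using TensorProduct.induction_on with
      | zero => simp
      | add x x' hx hx' => simp only [map_add, LinearMap.add_apply, hx, hx']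
      | tmul b g =>
        rw [hsm, hsm, h4, hμ]
        induction Coalgebra.comul (R := k) h using TensorProduct.induction_on with
        | zero => simp
        | add x y hx hy => simp only [map_add, LinearMap.add_apply, hx, hy]
        | tmul x y => simp [hsm, h2]
    have hE : ∀ m, sm (smashE k H A) m = m := by
      intro m; rw [smashE, hsm, h1, h3]
    refine ⟨sm, ⟨hE, fun x _ y _ m => hmul x y m⟩, ?_, ?_⟩
    · intro a h m
      rw [hmul, hE, hsm]
    · intro a
      have : ∀ m, sm (smashF k μ a) m = ra a m := by
        intro m
        change sm (μ (a ⊗ₜ[k] 1) (smashE k H A)) m = _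
        rw [hmul, hE, hsm, h3]
      simp only [this]
  · rintro sm ⟨h1, h2⟩
    have hF : ∀ a : A, smashF k μ a = a ⊗ₜ[k] 1 := by
      intro a
      change μ (a ⊗ₜ[k] 1) ((1 : A) ⊗ₜ[k] (1 : H)) = _
      rw [aux_mu_one k ξ μ hμ, mul_one]
    have hS : ∀ x, μ x (smashE k H A) ∈ smashS k μ := fun x => ⟨x, rfl⟩
    have hFS : ∀ a : A, (a ⊗ₜ[k] (1 : H)) ∈ smashS k μ := by
      intro a; rw [← hF]; exact hS _
    have hSS : ∀ x, ∀ y ∈ smashS k μ, μ x y ∈ smashS k μ := by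
      rintro x _ ⟨y, rfl⟩
      change μ x (μ y _) ∈ _
      rw [← aux_mu_assoc k ξ μ hμ]; exact hS _
    refine ⟨?_, ?_, ?_, ?_⟩
    · intro m
      rw [LinearMap.comp_apply, hF]; exact h1 m
    · intro a b m
      simp only [LinearMap.comp_apply, hF]
      rw [← h2 _ (hFS a) _ (hFS b), aux_mu_one k ξ μ hμ]
    · intro m
      change sm (smashF k μ 1) m = m
      rw [hF]; exact h1 m
    · intro h g a m
      simp only [LinearMap.comp_apply, hF]
      change sm (μ (1 ⊗ₜ[k] g) (smashE k H A)) (sm (a ⊗ₜ[k] 1)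
        (sm (μ (1 ⊗ₜ[k] h) (smashE k H A)) m)) = _
      rw [← h2 _ (hS _) _ (hFS a), ← h2 _ (hSS _ _ (hFS a)) _ (hS _),
        aux_mu_assoc k ξ μ hμ, aux_mu_assoc k ξ μ hμ, ← aux_mu_assoc k ξ μ hμ (a ⊗ₜ[k] 1),
        aux_mu_one k ξ μ hμ, mul_one, ← aux_mu_assoc k ξ μ hμ (smashE k H A), smashE,
        aux_mu_one k ξ μ hμ, one_mul, ← aux_mu_assoc k ξ μ hμ, hμ]
      induction Coalgebra.comul (R := k) h using TensorProduct.induction_on with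
      | zero => simp
      | add x y hx hy => simp only [map_add, LinearMap.add_apply, hx, hy]
      | tmul x y =>
        rw [TensorProduct.lift.tmul]
        change _ = sm (μ (1 ⊗ₜ[k] (y * g)) (smashE k H A)) (sm (smashF k μ (ξ.act x a)) m)
        rw [hF, ← h2 _ (hFS _) _ (hS _), ← aux_mu_assoc k ξ μ hμ, aux_mu_one k ξ μ hμ, mul_one]
        simp [smashE]
end
end
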